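/- Assume hypotheses (C1) and (H), and let u ∈ C²([a,b]) be a solution of the straight BVP; u is then strictly increasing with u' > 0 on [a,b], and its inverse x = u⁻¹ : [0,u_b] → [a,b] is continuously differentiable. Then there exist constants κ_S > 0, κ_I > 0 and h₀ > 0, depending only on N, a, b, c and u_b, such that for every straight mesh on [a,c] and inverse mesh on [0,u_b] whose maximal step size h satisfies h ≤ h₀, and for every scheme pair (ũ, x̃) additionally satisfying the inequalities 0 < ũ(x) < u_b, ũ'(x) > 0, ũ''(x) ≥ 0 on (a,c] and c < x̃(v), x̃'(v) > 0, x̃''(v) ≤ 0 on (ũ(c), u_b] (second derivatives taken on mesh subintervals), one has max_{x ∈ [a,c]} max(|u(x) − ũ(x)|, |u'(x) − ũ'(x)|) ≤ κ_S·h² and max_{v ∈ [ũ(c), u_b]} max(|x(v) − x̃(v)|, |x'(v) − x̃'(v)|) ≤ κ_I·h². -/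

import Mathlib

open Set Filter

noncomputable section

/-- Partial derivative of a two-argument function with respect to its first argument. -/
def pd1 (f : ℝ → ℝ → ℝ) (u x : ℝ) : ℝ := deriv (fun t => f t x) u

/-- Partial derivative of a two-argument function with respect to its second argument. -/
def pd2 (f : ℝ → ℝ → ℝ) (u x : ℝ) : ℝ := deriv (fun s => f u s) x

/-- The nonlinearity `𝒩(u,x) = N(u,x)·u`. -/
def Ncal (N : ℝ → ℝ → ℝ) (u x : ℝ) : ℝ := N u x * u

/-- `u` is twice continuously differentiable on `s`, with first derivative `u'`
and second derivative `u''` (derivatives within `s`). -/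
def IsC2On (u u' u'' : ℝ → ℝ) (s : Set ℝ) : Prop :=
  (∀ x ∈ s, HasDerivWithinAt u (u' x) s x) ∧
  (∀ x ∈ s, HasDerivWithinAt u' (u'' x) s x) ∧
  ContinuousOn u'' s

/-- The straight boundary value problem: `u ∈ C²([a,b])`, `u'' = 𝒩(u(x),x)` on `[a,b]`,
`u(a) = 0`, `u(b) = ub`. -/
def IsStraightBVP (N : ℝ → ℝ → ℝ) (a b ub : ℝ) (u u' u'' : ℝ → ℝ) : Prop :=
  IsC2On u u' u'' (Icc a b) ∧
  (∀ x ∈ Icc a b, u'' x = Ncal N (u x) x) ∧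
  u a = 0 ∧ u b = ub

/-- Hypothesis (H): `N`, `∂N/∂x`, `∂N/∂u`, `∂²N/∂x∂u`, `∂²N/∂u²` are all
nonnegative for `u ≥ 0` and `x ∈ [a,b]`. -/
def HypH (N : ℝ → ℝ → ℝ) (a b : ℝ) : Prop :=
  ∀ u : ℝ, 0 ≤ u → ∀ x ∈ Icc a b,
    0 ≤ N u x ∧ 0 ≤ pd2 N u x ∧ 0 ≤ pd1 N u x ∧
    0 ≤ pd2 (pd1 N) u x ∧ 0 ≤ pd1 (pd1 N) u x

/-- A mesh: finitely many strictly increasing points `pt 0 < pt 1 < ⋯ < pt n`. -/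
structure Mesh where
  n : ℕ
  pt : ℕ → ℝ
  npos : 0 < n
  mono : ∀ i < n, pt i < pt (i + 1)

/-- The coefficient `α_i(p,q,x)` of the straight discretized equation,
where `xi` is the mesh point `x_i`. -/
def alphaC (N : ℝ → ℝ → ℝ) (xi p q x : ℝ) : ℝ :=
  (pd1 N q xi * p + pd2 N q xi) * (x - xi) + N q xi

/-- The coefficient `β_i(p,q,v)` of the inverse discretized equation,
where `ui` is the (shifted) mesh point `ū_i`. -/
def betaC (N : ℝ → ℝ → ℝ) (ui p q v : ℝ) : ℝ :=
  -(pd1 (Ncal N) ui q + pd2 (Ncal N) ui q * p) * (v - ui) - Ncal N ui q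

/-- Shifted mesh knots `ū_i = max(u_i, s)`. -/
def ubar (m : Mesh) (s : ℝ) (i : ℕ) : ℝ := max (m.pt i) s

/-- A straight scheme solution on `[a,c]` with respect to the mesh `m`:
`ũ ∈ C¹([a,c])` and on each mesh subinterval `[x_i, x_{i+1}]` the second
derivative of `ũ` equals `α_i(ũ'(x_i), ũ(x_i), x)·ũ(x)`. -/
def IsStraightSol (N : ℝ → ℝ → ℝ) (a c : ℝ) (m : Mesh) (u u' : ℝ → ℝ) : Prop :=
  (∀ x ∈ Icc a c, HasDerivWithinAt u (u' x) (Icc a c) x) ∧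
  ContinuousOn u' (Icc a c) ∧
  ∀ i < m.n, ∀ x ∈ Icc (m.pt i) (m.pt (i + 1)),
    HasDerivWithinAt u'
      (alphaC N (m.pt i) (u' (m.pt i)) (u (m.pt i)) x * u x)
      (Icc (m.pt i) (m.pt (i + 1))) x

/-- An inverse scheme solution on `[s, ub]` with respect to the mesh `m` (shifted by `s`):
`x̃ ∈ C¹([s,ub])` and on each subinterval `[ū_i, ū_{i+1}]` the second derivative of `x̃`
equals `β_i(x̃'(ū_i), x̃(ū_i), v)·(x̃'(v))³`. -/
def IsInvSol (N : ℝ → ℝ → ℝ) (ub : ℝ) (m : Mesh) (s : ℝ) (X X' : ℝ → ℝ) : Prop :=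
  (∀ v ∈ Icc s ub, HasDerivWithinAt X (X' v) (Icc s ub) v) ∧
  ContinuousOn X' (Icc s ub) ∧
  ∀ i < m.n, ∀ v ∈ Icc (ubar m s i) (ubar m s (i + 1)),
    HasDerivWithinAt X'
      (betaC N (ubar m s i) (X' (ubar m s i)) (X (ubar m s i)) v * (X' v) ^ 3)
      (Icc (ubar m s i) (ubar m s (i + 1))) v

/-- A scheme pair `(ũ, x̃)`. -/
def IsSchemePair (N : ℝ → ℝ → ℝ) (a b c ub : ℝ) (ms mi : Mesh)
    (u u' X X' : ℝ → ℝ) : Prop :=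
  IsStraightSol N a c ms u u' ∧ u a = 0 ∧ 0 < u c ∧ u c < ub ∧ u' c ≠ 0 ∧
  IsInvSol N ub mi (u c) X X' ∧ X ub = b ∧ X (u c) = c ∧ X' (u c) = 1 / u' c

/-- A scheme pair additionally satisfying the sign inequalities
`0 < ũ < u_b`, `ũ' > 0`, `ũ'' ≥ 0` on `(a,c]`, and `c < x̃`, `x̃' > 0`, `x̃'' ≤ 0`
on `(ũ(c), u_b]` (second derivatives taken on the mesh subintervals). -/
def GoodPair (N : ℝ → ℝ → ℝ) (a b c ub : ℝ) (ms mi : Mesh)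
    (u u' X X' : ℝ → ℝ) : Prop :=
  IsSchemePair N a b c ub ms mi u u' X X' ∧
  (∀ x ∈ Ioc a c, 0 < u x ∧ u x < ub ∧ 0 < u' x) ∧
  (∀ i < ms.n, ∀ x ∈ Icc (ms.pt i) (ms.pt (i + 1)), x ∈ Ioc a c →
    0 ≤ alphaC N (ms.pt i) (u' (ms.pt i)) (u (ms.pt i)) x * u x) ∧
  (∀ v ∈ Ioc (u c) ub, c < X v ∧ 0 < X' v) ∧
  (∀ i < mi.n, ∀ v ∈ Icc (ubar mi (u c) i) (ubar mi (u c) (i + 1)), v ∈ Ioc (u c) ub →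
    betaC N (ubar mi (u c) i) (X' (ubar mi (u c) i)) (X (ubar mi (u c) i)) v * (X' v) ^ 3 ≤ 0)

/-- All steps of the straight mesh `ms` and of the (shifted) inverse mesh `mi`
are of size at most `h`. -/
def StepLe (ms mi : Mesh) (s h : ℝ) : Prop :=
  (∀ i < ms.n, ms.pt (i + 1) - ms.pt i ≤ h) ∧
  (∀ i < mi.n, ubar mi s (i + 1) - ubar mi s i ≤ h)

/-!
The idea is to read a scheme pair as a single function. Follow `ũ` up to `c` and the inverse
function of `x̃` from `c` on; the matching conditions at `c` make the result a `C¹` function `w` on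
`[a, b]` with the boundary values of `u`. On each mesh interval the schemes replace `N` or `𝒩` by a
first-order Taylor expansion at the left knot, so `w` solves `w'' = 𝒩(w, x)` up to a residual of
order `h²`.

Since `𝒩` is nondecreasing in its first argument, the maximum principle bounds `u - w` by the
residual, and Rolle's theorem then bounds `u' - w'`. To expand along the inverse arc and to pass to
inverse functions one needs a lower bound on `w'` that does not depend on the mesh. By convexity it
suffices to bound `w' a`, and since `w'' ≤ C w`, Grönwall's inequality shows that `w b = u_b` could
not be reached from too small a slope.
-/

open scoped Topology

section RightDerivative

variable {f f' : ℝ → ℝ} {l r C : ℝ}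

theorem mul_sub_le_sub_of_le_rightDeriv (hf : ContinuousOn f (Icc l r))
    (hf' : ∀ x ∈ Ico l r, HasDerivWithinAt f (f' x) (Ici x) x)
    (hC : ∀ x ∈ Ico l r, C ≤ f' x) {x y : ℝ} (hx : x ∈ Icc l r) (hy : y ∈ Icc l r)
    (hxy : x ≤ y) : C * (y - x) ≤ f y - f x := by
  have hline (t : ℝ) : HasDerivAt (fun t => -f x - C * (t - x)) (-C) t := by
    simpa using (((hasDerivAt_id t).sub_const x).const_mul C).const_sub (-f x)
  have := image_le_of_deriv_right_le_deriv_boundary (f := fun t => -f t)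
    (hf.neg.mono (Icc_subset_Icc hx.1 hy.2))
    (fun t ht => (hf' t ⟨hx.1.trans ht.1, ht.2.trans_le hy.2⟩).neg) (by simp) (by fun_prop)
    (fun t _ => (hline t).hasDerivWithinAt)
    (fun t ht => neg_le_neg (hC t ⟨hx.1.trans ht.1, ht.2.trans_le hy.2⟩)) (right_mem_Icc.2 hxy)
  linarith

theorem monotoneOn_of_rightDeriv_nonneg (hf : ContinuousOn f (Icc l r))
    (hf' : ∀ x ∈ Ico l r, HasDerivWithinAt f (f' x) (Ici x) x)
    (hf'₀ : ∀ x ∈ Ico l r, 0 ≤ f' x) : MonotoneOn f (Icc l r) := by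
  intro x hx y hy hxy
  have := mul_sub_le_sub_of_le_rightDeriv hf hf' hf'₀ hx hy hxy
  linarith

theorem hasDerivWithinAt_Ici_of_Icc {d x : ℝ} (h : HasDerivWithinAt f d (Icc l r) x)
    (hx : x ∈ Ico l r) : HasDerivWithinAt f d (Ici x) x :=
  h.mono_of_mem_nhdsWithin (Icc_mem_nhdsGE_of_mem hx)

end RightDerivative

/-- `f` is `C¹` on `[l, r]` with derivative `f'`, and `f'` has the right derivative `f''` on
`[l, r)`. This is the regularity of the solutions of the discretized equations, whose second
derivative jumps at the mesh points. -/
structure HasRightSecondDerivOn (f f' f'' : ℝ → ℝ) (l r : ℝ) : Prop where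
  hasDeriv : ∀ x ∈ Icc l r, HasDerivWithinAt f (f' x) (Icc l r) x
  continuousOn_deriv : ContinuousOn f' (Icc l r)
  hasRightDeriv : ∀ x ∈ Ico l r, HasDerivWithinAt f' (f'' x) (Ici x) x

theorem IsC2On.hasRightSecondDerivOn {f f' f'' : ℝ → ℝ} {l r : ℝ}
    (h : IsC2On f f' f'' (Icc l r)) : HasRightSecondDerivOn f f' f'' l r where
  hasDeriv := h.1
  continuousOn_deriv x hx := (h.2.1 x hx).continuousWithinAt
  hasRightDeriv x hx := hasDerivWithinAt_Ici_of_Icc (h.2.1 x ⟨hx.1, hx.2.le⟩) hx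

namespace HasRightSecondDerivOn

variable {f f' f'' g g' g'' : ℝ → ℝ} {l r x y C : ℝ}

theorem continuousOn (h : HasRightSecondDerivOn f f' f'' l r) : ContinuousOn f (Icc l r) :=
  HasDerivWithinAt.continuousOn h.hasDeriv

theorem hasDerivAt (h : HasRightSecondDerivOn f f' f'' l r) (hx : x ∈ Ioo l r) :
    HasDerivAt f (f' x) x :=
  (h.hasDeriv x ⟨hx.1.le, hx.2.le⟩).hasDerivAt (Icc_mem_nhds hx.1 hx.2)

theorem hasDerivWithinAt_Ici (h : HasRightSecondDerivOn f f' f'' l r) (hx : x ∈ Ico l r) :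
    HasDerivWithinAt f (f' x) (Ici x) x :=
  hasDerivWithinAt_Ici_of_Icc (h.hasDeriv x ⟨hx.1, hx.2.le⟩) hx

theorem mono {l₁ r₁ : ℝ} (h : HasRightSecondDerivOn f f' f'' l r) (hl : l ≤ l₁) (hr : r₁ ≤ r) :
    HasRightSecondDerivOn f f' f'' l₁ r₁ where
  hasDeriv x hx := (h.hasDeriv x (Icc_subset_Icc hl hr hx)).mono (Icc_subset_Icc hl hr)
  continuousOn_deriv := h.continuousOn_deriv.mono (Icc_subset_Icc hl hr)
  hasRightDeriv x hx := h.hasRightDeriv x (Ico_subset_Ico hl hr hx)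

theorem neg (h : HasRightSecondDerivOn f f' f'' l r) :
    HasRightSecondDerivOn (fun x => -f x) (fun x => -f' x) (fun x => -f'' x) l r where
  hasDeriv x hx := (h.hasDeriv x hx).neg
  continuousOn_deriv := h.continuousOn_deriv.neg
  hasRightDeriv x hx := (h.hasRightDeriv x hx).neg

theorem sub (hf : HasRightSecondDerivOn f f' f'' l r) (hg : HasRightSecondDerivOn g g' g'' l r) :
    HasRightSecondDerivOn (fun x => f x - g x) (fun x => f' x - g' x) (fun x => f'' x - g'' x)
      l r where
  hasDeriv x hx := (hf.hasDeriv x hx).sub (hg.hasDeriv x hx)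
  continuousOn_deriv := hf.continuousOn_deriv.sub hg.continuousOn_deriv
  hasRightDeriv x hx := (hf.hasRightDeriv x hx).sub (hg.hasRightDeriv x hx)

theorem monotoneOn (h : HasRightSecondDerivOn f f' f'' l r) (hf' : ∀ x ∈ Ico l r, 0 ≤ f' x) :
    MonotoneOn f (Icc l r) :=
  monotoneOn_of_rightDeriv_nonneg h.continuousOn (fun _ hx => h.hasDerivWithinAt_Ici hx) hf'

theorem strictMonoOn (h : HasRightSecondDerivOn f f' f'' l r) (hf' : ∀ x ∈ Icc l r, 0 < f' x) :
    StrictMonoOn f (Icc l r) :=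
  strictMonoOn_of_hasDerivWithinAt_pos (convex_Icc l r) h.continuousOn
    (fun x hx => (h.hasDeriv x (interior_subset hx)).mono interior_subset)
    fun x hx => hf' x (interior_subset hx)

theorem monotoneOn_deriv (h : HasRightSecondDerivOn f f' f'' l r)
    (hf'' : ∀ x ∈ Ico l r, 0 ≤ f'' x) : MonotoneOn f' (Icc l r) :=
  monotoneOn_of_rightDeriv_nonneg h.continuousOn_deriv h.hasRightDeriv hf''

theorem mul_abs_sub_le_abs_sub (h : HasRightSecondDerivOn f f' f'' l r)
    (hC : ∀ x ∈ Ico l r, C ≤ f' x) (hx : x ∈ Icc l r) (hy : y ∈ Icc l r) :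
    C * |y - x| ≤ |f y - f x| := by
  wlog hxy : x ≤ y generalizing x y
  · rw [abs_sub_comm, abs_sub_comm (f y)]
    exact this hy hx (le_of_not_ge hxy)
  rw [abs_of_nonneg (sub_nonneg.2 hxy)]
  exact (mul_sub_le_sub_of_le_rightDeriv h.continuousOn (fun _ ht => h.hasDerivWithinAt_Ici ht)
    hC hx hy hxy).trans (le_abs_self _)

theorem tangent_le (h : HasRightSecondDerivOn f f' f'' l r) (hf'' : ∀ x ∈ Ico l r, 0 ≤ f'' x)
    (hx : x ∈ Icc l r) (hy : y ∈ Icc l r) : f x + f' x * (y - x) ≤ f y := by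
  have hmono := h.monotoneOn_deriv hf''
  have hmvt {s t : ℝ} (hs : s ∈ Icc l r) (ht : t ∈ Icc l r) (hst : s < t) :
      ∃ ξ ∈ Ioo s t, ξ ∈ Icc l r ∧ f t - f s = f' ξ * (t - s) := by
    obtain ⟨ξ, hξ, hslope⟩ := exists_hasDerivAt_eq_slope f f' hst
      (h.continuousOn.mono (Icc_subset_Icc hs.1 ht.2))
      fun w hw => h.hasDerivAt ⟨hs.1.trans_lt hw.1, hw.2.trans_le ht.2⟩
    refine ⟨ξ, hξ, ⟨hs.1.trans hξ.1.le, hξ.2.le.trans ht.2⟩, ?_⟩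
    rw [hslope, div_mul_cancel₀ _ (sub_pos.2 hst).ne']
  rcases lt_trichotomy x y with hxy | rfl | hyx
  · obtain ⟨ξ, hξ, hξ', heq⟩ := hmvt hx hy hxy
    nlinarith [hmono hx hξ' hξ.1.le]
  · simp
  · obtain ⟨ξ, hξ, hξ', heq⟩ := hmvt hy hx hyx
    nlinarith [hmono hξ' hx hξ.2.le]

theorem deriv_left_nonneg (h : HasRightSecondDerivOn f f' f'' l r) (hlr : l < r)
    (hmin : ∀ x ∈ Icc l r, f l ≤ f x) : 0 ≤ f' l := by
  have hlocal : IsLocalMinOn f (Icc l r) l := IsMinOn.localize hmin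
  have hl : l ∈ Icc l r := left_mem_Icc.2 hlr.le
  have hcone : r - l ∈ posTangentConeAt (Icc l r) l :=
    sub_mem_posTangentConeAt_of_segment_subset
      ((convex_Icc l r).segment_subset hl (right_mem_Icc.2 hlr.le))
  have := hlocal.hasFDerivWithinAt_nonneg (h.hasDeriv l hl).hasFDerivWithinAt hcone
  simpa [hlr, not_lt.2 hlr.le] using this

theorem abs_deriv_sub_le (h : HasRightSecondDerivOn f f' f'' l r)
    (hC : ∀ x ∈ Ico l r, |f'' x| ≤ C) (hx : x ∈ Icc l r) (hy : y ∈ Icc l r) :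
    |f' y - f' x| ≤ C * |y - x| := by
  wlog hxy : x ≤ y generalizing x y
  · rw [abs_sub_comm, abs_sub_comm y]
    exact this hy hx (le_of_not_ge hxy)
  rw [abs_of_nonneg (sub_nonneg.2 hxy)]
  exact norm_image_sub_le_of_norm_deriv_right_le_segment
    (h.continuousOn_deriv.mono (Icc_subset_Icc hx.1 hy.2))
    (fun t ht => h.hasRightDeriv t ⟨hx.1.trans ht.1, ht.2.trans_le hy.2⟩)
    (fun t ht => hC t ⟨hx.1.trans ht.1, ht.2.trans_le hy.2⟩) y (right_mem_Icc.2 hxy)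

theorem abs_taylor_le (h : HasRightSecondDerivOn f f' f'' l r)
    (hC : ∀ x ∈ Ico l r, |f'' x| ≤ C) (hx : x ∈ Icc l r) (hy : y ∈ Icc l r) (hxy : x ≤ y) :
    |f y - f x - f' x * (y - x)| ≤ C * (y - x) ^ 2 := by
  rcases hxy.eq_or_lt with rfl | hlt
  · simp
  have hC₀ : 0 ≤ C := (abs_nonneg _).trans (hC x ⟨hx.1, hlt.trans_le hy.2⟩)
  have hIco (t : ℝ) (ht : t ∈ Ico x y) : t ∈ Ico l r := ⟨hx.1.trans ht.1, ht.2.trans_le hy.2⟩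
  have hline (t : ℝ) : HasDerivAt (fun t => f' x * t) (f' x) t := by
    simpa using (hasDerivAt_id t).const_mul (f' x)
  have hremainder := norm_image_sub_le_of_norm_deriv_right_le_segment (C := C * (y - x))
    (f := fun t => f t - f' x * t) (f' := fun t => f' t - f' x)
    ((h.continuousOn.mono (Icc_subset_Icc hx.1 hy.2)).sub (by fun_prop))
    (fun t ht => (h.hasDerivWithinAt_Ici (hIco t ht)).sub (hline t).hasDerivWithinAt)
    (fun t ht => by
      refine (h.abs_deriv_sub_le hC hx ⟨(hIco t ht).1, (hIco t ht).2.le⟩).trans ?_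
      rw [abs_of_nonneg (sub_nonneg.2 ht.1)]
      gcongr
      exact ht.2.le) y (right_mem_Icc.2 hxy)
  calc |f y - f x - f' x * (y - x)| = |f y - f' x * y - (f x - f' x * x)| := by ring_nf
    _ ≤ C * (y - x) * (y - x) := hremainder
    _ = C * (y - x) ^ 2 := by ring

theorem abs_taylor_inverse_le {δ : ℝ} (h : HasRightSecondDerivOn f f' f'' l r)
    (hC : ∀ x ∈ Ico l r, |f'' x| ≤ C) (hδ₀ : 0 < δ) (hδ : ∀ x ∈ Icc l r, δ ≤ f' x)
    (hx : x ∈ Icc l r) (hy : y ∈ Icc l r) (hxy : x ≤ y) :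
    |y - x - (f y - f x) * (1 / f' x)| ≤ C / δ ^ 3 * (f y - f x) ^ 2 := by
  rcases hxy.eq_or_lt with rfl | hlt
  · simp
  have hC₀ : 0 ≤ C := (abs_nonneg _).trans (hC x ⟨hx.1, hlt.trans_le hy.2⟩)
  have hf'x : 0 < f' x := hδ₀.trans_le (hδ x hx)
  have hspread : |y - x| ≤ |f y - f x| / δ := by
    rw [le_div_iff₀' hδ₀]
    exact h.mul_abs_sub_le_abs_sub (fun t ht => hδ t (Ico_subset_Icc_self ht)) hx hy
  have hsolve : y - x - (f y - f x) * (1 / f' x) = -(f y - f x - f' x * (y - x)) / f' x := by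
    field_simp
    ring
  rw [hsolve, abs_div, abs_neg, abs_of_pos hf'x]
  calc |f y - f x - f' x * (y - x)| / f' x ≤ C * (|f y - f x| / δ) ^ 2 / δ := by
        refine div_le_div₀ (by positivity) ((h.abs_taylor_le hC hx hy hxy).trans ?_) hδ₀ (hδ x hx)
        rw [← sq_abs (y - x)]
        gcongr
    _ = C / δ ^ 3 * (f y - f x) ^ 2 := by
        rw [div_pow, sq_abs]
        field_simp

/-! ### Maximum principle and lower bound on the slope -/

-- A positive maximum at `t` would propagate: `f` is convex until it next becomes nonpositive,
-- so it cannot decrease after `t`.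
theorem nonpos_of_rightSecondDeriv_nonneg (h : HasRightSecondDerivOn f f' f'' l r)
    (hl : f l ≤ 0) (hr : f r ≤ 0) (hf'' : ∀ x ∈ Ioo l r, 0 < f x → 0 ≤ f'' x) :
    ∀ x ∈ Icc l r, f x ≤ 0 := by
  intro x hx
  obtain ⟨t, ht, hmax⟩ := isCompact_Icc.exists_isMaxOn ⟨x, hx⟩ h.continuousOn
  refine (hmax hx).trans (not_lt.1 fun hpos => ?_)
  have hlt : l < t := ht.1.lt_of_ne fun e => (e ▸ hpos).not_ge hl
  have htr : t < r := ht.2.lt_of_ne fun e => (e ▸ hpos).not_ge hr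
  have hcrit : f' t = 0 :=
    (hmax.isLocalMax (Icc_mem_nhds hlt htr)).hasDerivAt_eq_zero (h.hasDerivAt ⟨hlt, htr⟩)
  have htr_mono := h.mono hlt.le (le_refl r)
  obtain ⟨e, ⟨he, hfe⟩, hleast⟩ : ∃ e, IsLeast (Icc t r ∩ f ⁻¹' Iic 0) e :=
    (isCompact_Icc.of_isClosed_subset
      (htr_mono.continuousOn.preimage_isClosed_of_isClosed isClosed_Icc isClosed_Iic)
      inter_subset_left).exists_isLeast ⟨r, right_mem_Icc.2 htr.le, hr⟩
  have hfpos (y : ℝ) (hy : y ∈ Ico t e) : 0 < f y := not_le.1 fun hfy =>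
    (hleast ⟨⟨hy.1, hy.2.le.trans he.2⟩, hfy⟩).not_gt hy.2
  have hte := htr_mono.mono le_rfl he.2
  have hf'mono := hte.monotoneOn_deriv fun y hy =>
    hf'' y ⟨hlt.trans_le hy.1, hy.2.trans_le he.2⟩ (hfpos y hy)
  have hfmono := hte.monotoneOn fun y hy =>
    hcrit ▸ hf'mono (left_mem_Icc.2 he.1) ⟨hy.1, hy.2.le⟩ hy.1
  exact hpos.not_ge ((hfmono (left_mem_Icc.2 he.1) (right_mem_Icc.2 he.1) he.1).trans hfe)

theorem le_mul_exp (h : HasRightSecondDerivOn f f' f'' l r) (hC : 0 ≤ C) (hlr : l ≤ r)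
    (hf : ∀ x ∈ Ico l r, 0 ≤ f x) (hf' : ∀ x ∈ Ico l r, 0 ≤ f' x)
    (hf'' : ∀ x ∈ Ico l r, f'' x ≤ C * f x) :
    f r + f' r ≤ (f l + f' l) * Real.exp ((C + 1) * (r - l)) := by
  rw [← gronwallBound_ε0]
  refine le_gronwallBound_of_liminf_deriv_right_le (f := fun x => f x + f' x)
    (f' := fun x => f' x + f'' x) (h.continuousOn.add h.continuousOn_deriv)
    (fun x hx _ => ((h.hasDerivWithinAt_Ici hx).add (h.hasRightDeriv x hx)).liminf_right_slope_le)
    le_rfl (fun x hx => ?_) r (right_mem_Icc.2 hlr)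
  linarith [hf x hx, mul_nonneg hC (hf' x hx), hf'' x hx]

theorem deriv_nonneg (h : HasRightSecondDerivOn f f' f'' l r) (hlr : l < r)
    (hfl : f l = 0) (hf : ∀ x ∈ Icc l r, 0 ≤ f x) (hf'' : ∀ x ∈ Ico l r, 0 ≤ f'' x) :
    ∀ x ∈ Icc l r, 0 ≤ f' x := fun _ hx =>
  (h.deriv_left_nonneg hlr fun y hy => hfl.symm ▸ hf y hy).trans
    (h.monotoneOn_deriv hf'' (left_mem_Icc.2 hlr.le) hx hx.1)

theorem div_exp_le_deriv (h : HasRightSecondDerivOn f f' f'' l r) (hC : 0 ≤ C) (hlr : l < r)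
    (hfl : f l = 0) (hf : ∀ x ∈ Icc l r, 0 ≤ f x) (hf''₀ : ∀ x ∈ Ico l r, 0 ≤ f'' x)
    (hf'' : ∀ x ∈ Ico l r, f'' x ≤ C * f x) (hx : x ∈ Icc l r) :
    f r / Real.exp ((C + 1) * (r - l)) ≤ f' x := by
  have hf'₀ := h.deriv_nonneg hlr hfl hf hf''₀
  have hgronwall := h.le_mul_exp hC hlr.le (fun y hy => hf y ⟨hy.1, hy.2.le⟩)
    (fun y hy => hf'₀ y ⟨hy.1, hy.2.le⟩) hf''
  rw [hfl, zero_add] at hgronwall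
  have hleft : f r / Real.exp ((C + 1) * (r - l)) ≤ f' l :=
    (div_le_iff₀ (Real.exp_pos _)).2 (by linarith [hf'₀ r (right_mem_Icc.2 hlr.le)])
  exact hleft.trans (h.monotoneOn_deriv hf''₀ (left_mem_Icc.2 hlr.le) hx hx.1)

/-! ### Inverse functions -/

theorem bijOn (h : HasRightSecondDerivOn f f' f'' l r) (hlr : l ≤ r)
    (hf' : ∀ x ∈ Icc l r, 0 < f' x) : BijOn f (Icc l r) (Icc (f l) (f r)) :=
  ⟨(h.strictMonoOn hf').monotoneOn.mapsTo_Icc, (h.strictMonoOn hf').injOn,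
    h.continuousOn.surjOn_Icc (left_mem_Icc.2 hlr) (right_mem_Icc.2 hlr)⟩

theorem continuousOn_of_rightInvOn {s : Set ℝ} (h : HasRightSecondDerivOn f f' f'' l r)
    (hf' : ∀ x ∈ Icc l r, 0 < f' x) (hg : MapsTo g s (Icc l r)) (hfg : RightInvOn g f s) :
    ContinuousOn g s := by
  rcases s.eq_empty_or_nonempty with rfl | ⟨v₀, hv₀⟩
  · exact continuousOn_empty g
  obtain ⟨t, ht, hmin⟩ := isCompact_Icc.exists_isMinOn ⟨g v₀, hg hv₀⟩ h.continuousOn_deriv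
  have hm := hf' t ht
  refine (LipschitzOnWith.of_dist_le_mul (K := Real.toNNReal (f' t)⁻¹)
    fun v hv w hw => ?_).continuousOn
  rw [Real.coe_toNNReal _ (inv_nonneg.2 hm.le), Real.dist_eq, Real.dist_eq, inv_mul_eq_div,
    le_div_iff₀' hm]
  simpa only [hfg hv, hfg hw] using
    h.mul_abs_sub_le_abs_sub (fun x hx => hmin (Ico_subset_Icc_self hx)) (hg hw) (hg hv)

theorem hasDerivWithinAt_of_rightInvOn {s : Set ℝ} (h : HasRightSecondDerivOn f f' f'' l r)
    (hf' : ∀ x ∈ Icc l r, 0 < f' x) (hg : MapsTo g s (Icc l r)) (hfg : RightInvOn g f s)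
    {v : ℝ} (hv : v ∈ s) : HasDerivWithinAt g (1 / f' (g v)) s v := by
  have hequiv : HasFDerivWithinAt f
      (ContinuousLinearEquiv.unitsEquivAut ℝ (Units.mk0 _ (hf' _ (hg hv)).ne') : ℝ →L[ℝ] ℝ)
      (Icc l r) (g v) := (h.hasDeriv _ (hg hv)).hasFDerivWithinAt
  have htendsto : Tendsto g (𝓝[s] v) (𝓝[Icc l r] (g v)) :=
    ((h.continuousOn_of_rightInvOn hf' hg hfg) v hv).tendsto_nhdsWithin hg
  refine (hequiv.of_local_left_inverse htendsto hv
    (eventually_nhdsWithin_of_forall hfg)).hasDerivWithinAt.congr_deriv ?_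
  simp [ContinuousLinearEquiv.unitsEquivAut]

theorem rightInvOn (h : HasRightSecondDerivOn f f' f'' l r) (hf' : ∀ x ∈ Icc l r, 0 < f' x)
    (hg : MapsTo g (Icc (f l) (f r)) (Icc l r)) (hfg : RightInvOn g f (Icc (f l) (f r))) :
    HasRightSecondDerivOn g (fun v => 1 / f' (g v)) (fun v => -f'' (g v) / f' (g v) ^ 3)
      (f l) (f r) where
  hasDeriv v hv := h.hasDerivWithinAt_of_rightInvOn hf' hg hfg hv
  continuousOn_deriv := continuousOn_const.div
    (h.continuousOn_deriv.comp (h.continuousOn_of_rightInvOn hf' hg hfg) hg)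
    fun v hv => (hf' _ (hg hv)).ne'
  hasRightDeriv v hv := by
    have hv' : v ∈ Icc (f l) (f r) := Ico_subset_Icc_self hv
    have hgv : g v ∈ Ico l r := ⟨(hg hv').1, (hg hv').2.lt_of_ne fun hgr =>
      hv.2.ne (by rw [← hfg hv', hgr])⟩
    have hmaps : MapsTo g (Icc v (f r)) (Ici (g v)) := fun w hw => by
      have hw' : w ∈ Icc (f l) (f r) := ⟨hv.1.trans hw.1, hw.2⟩
      rw [mem_Ici, ← (h.strictMonoOn hf').le_iff_le (hg hv') (hg hw'), hfg hv', hfg hw']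
      exact hw.1
    have hgderiv : HasDerivWithinAt g (1 / f' (g v)) (Icc v (f r)) v :=
      (h.hasDerivWithinAt_of_rightInvOn hf' hg hfg hv').mono (Icc_subset_Icc_left hv.1)
    have hne : f' (g v) ≠ 0 := (hf' _ (hg hv')).ne'
    have hinv := ((h.hasRightDeriv _ hgv).comp v hgderiv hmaps).inv hne
    simp only [one_div]
    refine (hasDerivWithinAt_Ici_of_Icc hinv ⟨le_rfl, hv.2⟩).congr_deriv ?_
    simp only [Function.comp_apply]
    field_simp

end HasRightSecondDerivOn

/-! ### Gluing at a point -/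

theorem piecewise_Iic_of_ge {f g : ℝ → ℝ} {c x : ℝ} (hfg : f c = g c) (hx : c ≤ x) :
    (Iic c).piecewise f g x = g x := by
  rcases hx.eq_or_lt with rfl | hlt
  · rw [piecewise_eq_of_mem _ _ _ (mem_Iic.2 le_rfl), hfg]
  · exact piecewise_eq_of_notMem _ _ _ (notMem_Iic.2 hlt)

theorem HasRightSecondDerivOn.piecewise {f f' f'' g g' g'' : ℝ → ℝ} {a b c : ℝ}
    (hac : a ≤ c) (hcb : c ≤ b) (hf : HasRightSecondDerivOn f f' f'' a c)
    (hg : HasRightSecondDerivOn g g' g'' c b) (h : f c = g c) (h' : f' c = g' c) :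
    HasRightSecondDerivOn ((Iic c).piecewise f g) ((Iic c).piecewise f' g')
      ((Iio c).piecewise f'' g'') a b := by
  have hleft (φ ψ : ℝ → ℝ) : EqOn ((Iic c).piecewise φ ψ) φ (Icc a c) :=
    (piecewise_eqOn _ _ _).mono Icc_subset_Iic_self
  have hright {φ ψ : ℝ → ℝ} (hφψ : φ c = ψ c) : EqOn ((Iic c).piecewise φ ψ) ψ (Icc c b) :=
    fun x hx => piecewise_Iic_of_ge hφψ hx.1
  constructor
  · rw [← Icc_union_Icc_eq_Icc hac hcb]
    intro x _
    refine HasDerivWithinAt.union ?_ ?_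
    · by_cases hx : x ∈ Icc a c
      · rw [hleft f' g' hx]
        exact (hf.hasDeriv x hx).congr (hleft f g) (hleft f g hx)
      · exact HasFDerivWithinAt.of_notMem_closure (by rwa [isClosed_Icc.closure_eq])
    · by_cases hx : x ∈ Icc c b
      · rw [hright h' hx]
        exact (hg.hasDeriv x hx).congr (hright h) (hright h hx)
      · exact HasFDerivWithinAt.of_notMem_closure (by rwa [isClosed_Icc.closure_eq])
  · rw [← Icc_union_Icc_eq_Icc hac hcb]
    exact (hf.continuousOn_deriv.congr (hleft f' g')).union_of_isClosed
      (hg.continuousOn_deriv.congr (hright h')) isClosed_Icc isClosed_Icc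
  · intro x hx
    rcases lt_or_ge x c with hxc | hcx
    · rw [piecewise_eq_of_mem _ _ _ (mem_Iio.2 hxc)]
      refine (hf.hasRightDeriv x ⟨hx.1, hxc⟩).congr_of_eventuallyEq ?_ (hleft f' g' ⟨hx.1, hxc.le⟩)
      filter_upwards [mem_nhdsWithin_of_mem_nhds (Iio_mem_nhds hxc)] with y hy
      exact piecewise_eq_of_mem _ _ _ (mem_Iic.2 (le_of_lt hy))
    · rw [piecewise_eq_of_notMem _ _ _ (notMem_Iio.2 hcx)]
      exact (hg.hasRightDeriv x ⟨hcx, hx.2⟩).congr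
        (fun y hy => piecewise_Iic_of_ge h' (hcx.trans hy)) (piecewise_Iic_of_ge h' hcx)

/-! ### Stability of monotone two-point boundary value problems -/

/-- `w` solves the equation `w'' = F(w, x)` on `[a, b)` up to a residual of size at most `R`. -/
structure IsApproxSol (F : ℝ → ℝ → ℝ) (a b R : ℝ) (w w' w'' : ℝ → ℝ) : Prop extends
    HasRightSecondDerivOn w w' w'' a b where
  abs_residual_le : ∀ x ∈ Ico a b, |w'' x - F (w x) x| ≤ R

theorem hasRightSecondDerivOn_parabola (a b k : ℝ) :
    HasRightSecondDerivOn (fun x => k * ((x - a) * (b - x))) (fun x => k * (a + b - 2 * x))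
      (fun _ => -(2 * k)) a b where
  hasDeriv x _ := by
    refine ((((hasDerivAt_id' x).sub_const a).mul
      ((hasDerivAt_id' x).const_sub b)).const_mul k).hasDerivWithinAt.congr_deriv ?_
    ring
  continuousOn_deriv := by fun_prop
  hasRightDeriv x _ := by
    refine ((((hasDerivAt_id' x).const_mul 2).const_sub
      (a + b)).const_mul k).hasDerivWithinAt.congr_deriv ?_
    ring

namespace IsApproxSol

variable {F : ℝ → ℝ → ℝ} {a b x R₁ R₂ : ℝ} {w₁ w₁' w₁'' w₂ w₂' w₂'' : ℝ → ℝ}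

theorem sub_le (h₁ : IsApproxSol F a b R₁ w₁ w₁' w₁'') (h₂ : IsApproxSol F a b R₂ w₂ w₂' w₂'')
    (hF : ∀ x ∈ Icc a b, Monotone fun q => F q x) (hab : a < b) (ha : w₁ a = w₂ a)
    (hb : w₁ b = w₂ b) (hx : x ∈ Icc a b) : w₁ x - w₂ x ≤ (R₁ + R₂) / 8 * (b - a) ^ 2 := by
  have hR : 0 ≤ R₁ + R₂ :=
    add_nonneg ((abs_nonneg _).trans (h₁.abs_residual_le a (left_mem_Ico.2 hab)))
      ((abs_nonneg _).trans (h₂.abs_residual_le a (left_mem_Ico.2 hab)))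
  have hmax := ((h₁.sub h₂.toHasRightSecondDerivOn).sub
    (hasRightSecondDerivOn_parabola a b ((R₁ + R₂) / 2))).nonpos_of_rightSecondDeriv_nonneg
    (by simp [ha]) (by simp [hb]) (fun t ht htpos => ?_) x hx
  · nlinarith [mul_nonneg hR (sq_nonneg (2 * x - a - b))]
  · have hparabola : 0 ≤ (R₁ + R₂) / 2 * ((t - a) * (b - t)) := mul_nonneg (by positivity)
      (mul_nonneg (sub_nonneg.2 ht.1.le) (sub_nonneg.2 ht.2.le))
    have ht' := Ioo_subset_Ico_self ht
    have hmono := hF t (Ico_subset_Icc_self ht') (show w₂ t ≤ w₁ t by linarith)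
    linarith [(abs_le.1 (h₁.abs_residual_le t ht')).1, (abs_le.1 (h₂.abs_residual_le t ht')).2]

theorem abs_sub_le (h₁ : IsApproxSol F a b R₁ w₁ w₁' w₁'')
    (h₂ : IsApproxSol F a b R₂ w₂ w₂' w₂'') (hF : ∀ x ∈ Icc a b, Monotone fun q => F q x)
    (hab : a < b) (ha : w₁ a = w₂ a) (hb : w₁ b = w₂ b) (hx : x ∈ Icc a b) :
    |w₁ x - w₂ x| ≤ (R₁ + R₂) / 8 * (b - a) ^ 2 := by
  refine abs_sub_le_iff.2 ⟨h₁.sub_le h₂ hF hab ha hb hx, ?_⟩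
  rw [add_comm R₁]
  exact h₂.sub_le h₁ hF hab ha.symm hb.symm hx

theorem abs_deriv_sub_le {L E : ℝ} (h₁ : IsApproxSol F a b R₁ w₁ w₁' w₁'')
    (h₂ : IsApproxSol F a b R₂ w₂ w₂' w₂'') (hL : 0 ≤ L)
    (hF : ∀ x ∈ Ico a b, |F (w₁ x) x - F (w₂ x) x| ≤ L * |w₁ x - w₂ x|)
    (hE : ∀ x ∈ Ico a b, |w₁ x - w₂ x| ≤ E) (hab : a < b) (ha : w₁ a = w₂ a) (hb : w₁ b = w₂ b)
    (hx : x ∈ Icc a b) : |w₁' x - w₂' x| ≤ (L * E + (R₁ + R₂)) * (b - a) := by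
  have hz := h₁.sub h₂.toHasRightSecondDerivOn
  obtain ⟨t, ht, hcrit⟩ := exists_hasDerivAt_eq_zero hab hz.continuousOn (by rw [ha, hb]; simp)
    fun y hy => hz.hasDerivAt hy
  have hz'' (y : ℝ) (hy : y ∈ Ico a b) : |w₁'' y - w₂'' y| ≤ L * E + (R₁ + R₂) := by
    have hFE := (hF y hy).trans (mul_le_mul_of_nonneg_left (hE y hy) hL)
    have hr₁ := h₁.abs_residual_le y hy
    have hr₂ := h₂.abs_residual_le y hy
    rw [abs_le] at hFE hr₁ hr₂ ⊢
    constructor <;> linarith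
  have hslope := hz.abs_deriv_sub_le hz'' (Ioo_subset_Icc_self ht) hx
  rw [hcrit, sub_zero] at hslope
  refine hslope.trans (mul_le_mul_of_nonneg_left ?_
    ((abs_nonneg _).trans (hz'' a (left_mem_Ico.2 hab))))
  exact abs_sub_le_of_le_of_le hx.1 hx.2 ht.1.le ht.2.le

end IsApproxSol

/-! ### Taylor bounds -/

section TaylorBound

variable {E F : Type*} [NormedAddCommGroup E] [NormedSpace ℝ E] [NormedAddCommGroup F]
  [NormedSpace ℝ F]

/-- On the set `s`, the constant `M` bounds `G`, its derivative, and the first-order Taylor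
remainders of `G` relative to the squared distance. -/
structure IsTaylorBound (G : E → F) (s : Set E) (M : ℝ) : Prop where
  norm_apply_le : ∀ p ∈ s, ‖G p‖ ≤ M
  norm_fderiv_le : ∀ p ∈ s, ‖fderiv ℝ G p‖ ≤ M
  norm_taylor_le : ∀ p ∈ s, ∀ q ∈ s, ‖G q - G p - fderiv ℝ G p (q - p)‖ ≤ M * ‖q - p‖ ^ 2

namespace IsTaylorBound

variable {G : E → F} {s : Set E} {M : ℝ} {p q : E}

theorem mono {M' : ℝ} (h : IsTaylorBound G s M) (hM : M ≤ M') : IsTaylorBound G s M' where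
  norm_apply_le p hp := (h.norm_apply_le p hp).trans hM
  norm_fderiv_le p hp := (h.norm_fderiv_le p hp).trans hM
  norm_taylor_le p hp q hq := (h.norm_taylor_le p hp q hq).trans (by gcongr)

theorem norm_fderiv_apply_le (h : IsTaylorBound G s M) (hp : p ∈ s) (w : E) :
    ‖fderiv ℝ G p w‖ ≤ M * ‖w‖ :=
  (fderiv ℝ G p).le_of_opNorm_le (h.norm_fderiv_le p hp) w

theorem norm_sub_le (h : IsTaylorBound G s M) (hG : Differentiable ℝ G) (hs : Convex ℝ s)
    (hp : p ∈ s) (hq : q ∈ s) : ‖G q - G p‖ ≤ M * ‖q - p‖ :=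
  hs.norm_image_sub_le_of_norm_fderiv_le (fun x _ => hG x) h.norm_fderiv_le hp hq

theorem norm_linearization_sub_le (h : IsTaylorBound G s M) (hp : p ∈ s) (hq : q ∈ s) (w : E) :
    ‖G p + fderiv ℝ G p w - G q‖ ≤ M * ‖q - p‖ ^ 2 + M * ‖q - p - w‖ := by
  calc ‖G p + fderiv ℝ G p w - G q‖
      = ‖(G q - G p - fderiv ℝ G p (q - p)) + fderiv ℝ G p (q - p - w)‖ := by
        rw [map_sub _ (q - p) w, ← norm_neg]
        congr 1
        abel
    _ ≤ _ := norm_add_le_of_le (h.norm_taylor_le p hp q hq) (h.norm_fderiv_apply_le hp _)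

end IsTaylorBound

theorem exists_isTaylorBound_of_contDiff {G : E → F} {s : Set E} (hG : ContDiff ℝ 2 G)
    (hs : IsCompact s) (hconv : Convex ℝ s) : ∃ M, 0 ≤ M ∧ IsTaylorBound G s M := by
  have hG' : ContDiff ℝ 1 (fderiv ℝ G) := hG.fderiv_right (by norm_num)
  have hdiff : Differentiable ℝ G := hG.differentiable (by norm_num)
  obtain ⟨A, hA⟩ := hs.exists_bound_of_continuousOn hG.continuous.continuousOn
  obtain ⟨B, hB⟩ := hs.exists_bound_of_continuousOn hG'.continuous.continuousOn
  obtain ⟨K, hK⟩ := hG'.contDiffOn.exists_lipschitzOnWith one_ne_zero hconv hs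
  have htaylor (p : E) (hp : p ∈ s) (q : E) (hq : q ∈ s) :
      ‖G q - G p - fderiv ℝ G p (q - p)‖ ≤ K * ‖q - p‖ ^ 2 := by
    have hsegment (x : E) (hx : x ∈ segment ℝ p q) :
        ‖fderiv ℝ G x - fderiv ℝ G p‖ ≤ K * ‖q - p‖ := by
      have := hK.norm_sub_le (hconv.segment_subset hp hq hx) hp
      exact this.trans (by gcongr; exact norm_sub_le_of_mem_segment hx)
    have := (convex_segment p q).norm_image_sub_le_of_norm_fderiv_le' (𝕜 := ℝ)
      (fun x _ => hdiff x) hsegment (left_mem_segment ℝ p q) (right_mem_segment ℝ p q)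
    exact this.trans_eq (by ring)
  refine ⟨|A| + |B| + K, by positivity, fun p hp => ?_, fun p hp => ?_, fun p hp q hq => ?_⟩
  · linarith [hA p hp, le_abs_self A, abs_nonneg B, K.2]
  · linarith [hB p hp, le_abs_self B, abs_nonneg A, K.2]
  · refine (htaylor p hp q hq).trans ?_
    gcongr
    linarith [abs_nonneg A, abs_nonneg B]

end TaylorBound

/-! ### The nonlinearity and the linearized coefficients -/

section Nonlinearity

variable {F N : ℝ → ℝ → ℝ}

theorem hasDerivAt_pd1 (hF : Differentiable ℝ (Function.uncurry F)) (q y : ℝ) :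
    HasDerivAt (fun t => F t y) (pd1 F q y) q :=
  DifferentiableAt.hasDerivAt <|
    (hF (q, y)).comp (f := fun t => (t, y)) q (by fun_prop)

theorem fderiv_uncurry_apply (hF : Differentiable ℝ (Function.uncurry F)) (q y s t : ℝ) :
    fderiv ℝ (Function.uncurry F) (q, y) (s, t) = pd1 F q y * s + pd2 F q y * t := by
  have h₁ : pd1 F q y = fderiv ℝ (Function.uncurry F) (q, y) (1, 0) :=
    ((hF (q, y)).hasFDerivAt.comp_hasDerivAt (f := fun t => (t, y)) q
      ((hasDerivAt_id' q).prodMk (hasDerivAt_const q y))).deriv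
  have h₂ : pd2 F q y = fderiv ℝ (Function.uncurry F) (q, y) (0, 1) :=
    ((hF (q, y)).hasFDerivAt.comp_hasDerivAt (f := fun t => (q, t)) y
      ((hasDerivAt_const y q).prodMk (hasDerivAt_id' y))).deriv
  have hst : ((s, t) : ℝ × ℝ) = s • ((1, 0) : ℝ × ℝ) + t • ((0, 1) : ℝ × ℝ) := by simp
  rw [hst, map_add, map_smul, map_smul, h₁, h₂, smul_eq_mul, smul_eq_mul, mul_comm s, mul_comm t]

theorem contDiff_uncurry_Ncal (hN : ContDiff ℝ 2 (Function.uncurry N)) :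
    ContDiff ℝ 2 (Function.uncurry (Ncal N)) :=
  hN.mul contDiff_fst

theorem exists_isTaylorBound_Ncal (hN : ContDiff ℝ 2 (Function.uncurry N)) {s : Set (ℝ × ℝ)}
    (hs : IsCompact s) (hconv : Convex ℝ s) :
    ∃ M, 0 ≤ M ∧ IsTaylorBound (Function.uncurry N) s M ∧
      IsTaylorBound (Function.uncurry (Ncal N)) s M := by
  obtain ⟨M₁, hM₁, h₁⟩ := exists_isTaylorBound_of_contDiff hN hs hconv
  obtain ⟨M₂, -, h₂⟩ := exists_isTaylorBound_of_contDiff (contDiff_uncurry_Ncal hN) hs hconv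
  exact ⟨max M₁ M₂, le_max_of_le_left hM₁, h₁.mono (le_max_left _ _), h₂.mono (le_max_right _ _)⟩

theorem pd2_Ncal (N : ℝ → ℝ → ℝ) (q y : ℝ) : pd2 (Ncal N) q y = pd2 N q y * q :=
  deriv_mul_const_field q

theorem monotone_Ncal (hN : ContDiff ℝ 2 (Function.uncurry N)) {x : ℝ}
    (h : ∀ t, 0 ≤ pd1 (Ncal N) t x) : Monotone fun t => Ncal N t x :=
  monotone_of_hasDerivAt_nonneg
    (hasDerivAt_pd1 ((contDiff_uncurry_Ncal hN).differentiable two_ne_zero) · x) h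

theorem Ncal_nonneg {t x : ℝ} (hmono : Monotone fun t => Ncal N t x) (ht : 0 ≤ t) :
    0 ≤ Ncal N t x := by
  simpa [Ncal] using hmono ht

theorem alphaC_eq_linearization (hN : Differentiable ℝ (Function.uncurry N)) (ξ p q x : ℝ) :
    alphaC N ξ p q x =
      N q ξ + fderiv ℝ (Function.uncurry N) (q, ξ) ((x - ξ) * p, x - ξ) := by
  rw [fderiv_uncurry_apply hN, alphaC]
  ring

theorem neg_betaC_eq_linearization (hN : Differentiable ℝ (Function.uncurry (Ncal N)))
    (w p q v : ℝ) :
    -betaC N w p q v =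
      Ncal N w q + fderiv ℝ (Function.uncurry (Ncal N)) (w, q) (v - w, (v - w) * p) := by
  rw [fderiv_uncurry_apply hN, betaC]
  ring

end Nonlinearity

/-! ### The exact solution -/

namespace IsStraightBVP

variable {N : ℝ → ℝ → ℝ} {a b ub : ℝ} {u u' u'' : ℝ → ℝ}

theorem isApproxSol (hu : IsStraightBVP N a b ub u u' u'') :
    IsApproxSol (Ncal N) a b 0 u u' u'' where
  toHasRightSecondDerivOn := hu.1.hasRightSecondDerivOn
  abs_residual_le x hx := by rw [hu.2.1 x (Ico_subset_Icc_self hx), sub_self, abs_zero]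

theorem nonneg (hu : IsStraightBVP N a b ub u u' u'') (hub : 0 ≤ ub)
    (hmono : ∀ x ∈ Icc a b, Monotone fun t => Ncal N t x) : ∀ x ∈ Icc a b, 0 ≤ u x := by
  obtain ⟨hC2, heq, hua, hu_b⟩ := hu
  intro x hx
  refine neg_nonpos.1 (hC2.hasRightSecondDerivOn.neg.nonpos_of_rightSecondDeriv_nonneg
    (by simp [hua]) (by simpa [hu_b]) (fun t ht hpos => ?_) x hx)
  have hle := hmono t (Ioo_subset_Icc_self ht) (neg_pos.1 hpos).le
  rw [heq t (Ioo_subset_Icc_self ht)]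
  simpa [Ncal] using hle

theorem deriv_pos (hu : IsStraightBVP N a b ub u u' u'') (hab : a < b) (hub : 0 < ub)
    (hN : Continuous (Function.uncurry N))
    (hmono : ∀ x ∈ Icc a b, Monotone fun t => Ncal N t x) : ∀ x ∈ Icc a b, 0 < u' x := by
  have hnonneg := hu.nonneg hub.le hmono
  obtain ⟨hC2, heq, hua, rfl⟩ := hu
  have h := hC2.hasRightSecondDerivOn
  obtain ⟨C, hC⟩ := isCompact_Icc.exists_bound_of_continuousOn
    (hN.comp_continuousOn (h.continuousOn.prodMk continuousOn_id))
  have hC₀ : 0 ≤ C := (norm_nonneg _).trans (hC a (left_mem_Icc.2 hab.le))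
  intro x hx
  refine lt_of_lt_of_le (div_pos hub (Real.exp_pos _))
    (h.div_exp_le_deriv hC₀ hab hua hnonneg (fun t ht => ?_) (fun t ht => ?_) hx) <;>
    have ht' := Ico_subset_Icc_self ht <;> rw [heq t ht']
  · exact Ncal_nonneg (hmono t ht') (hnonneg t ht')
  · exact mul_le_mul_of_nonneg_right ((le_abs_self _).trans (hC t ht')) (hnonneg t ht')

theorem bijOn (hu : IsStraightBVP N a b ub u u' u'') (hab : a ≤ b)
    (hpos : ∀ x ∈ Icc a b, 0 < u' x) : BijOn u (Icc a b) (Icc 0 ub) := by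
  simpa only [hu.2.2.1, hu.2.2.2] using hu.1.hasRightSecondDerivOn.bijOn hab hpos

end IsStraightBVP

/-! ### Profiles of scheme pairs -/

/-- The function on `[a, b]` obtained by following the straight arc of a scheme pair up to `c` and
the inverse function of its inverse arc beyond `c`. The meshes only enter through their step size:
each point `x` is reached from a knot `ξ` at distance at most `h`, measured along the `x`-axis on
the straight arc and along the `u`-axis on the inverse arc. In `inverse`, the coefficient
`-betaC` appears because `x̃'' = β (x̃')³` means `U'' = -β` for the inverse function `U`. -/
structure IsSIProfile (N : ℝ → ℝ → ℝ) (a b c ub h : ℝ) (U U' U'' : ℝ → ℝ) : Prop extends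
    HasRightSecondDerivOn U U' U'' a b where
  left_eq : U a = 0
  right_eq : U b = ub
  nonneg : ∀ x ∈ Icc a b, 0 ≤ U x
  deriv_pos : ∀ x ∈ Icc c b, 0 < U' x
  second_nonneg : ∀ x ∈ Ico a b, 0 ≤ U'' x
  straight : ∀ x ∈ Ico a c, ∃ ξ ∈ Icc a x,
    x - ξ ≤ h ∧ U'' x = alphaC N ξ (U' ξ) (U ξ) x * U x
  inverse : ∀ x ∈ Ico c b, ∃ ξ ∈ Icc c x,
    U x - U ξ ≤ h ∧ U'' x = -betaC N (U ξ) (1 / U' ξ) ξ (U x)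

namespace IsSIProfile

variable {N : ℝ → ℝ → ℝ} {a b c ub h x M P D δ : ℝ} {U U' U'' : ℝ → ℝ}

theorem deriv_nonneg (hU : IsSIProfile N a b c ub h U U' U'') (hab : a < b) :
    ∀ x ∈ Icc a b, 0 ≤ U' x :=
  hU.toHasRightSecondDerivOn.deriv_nonneg hab hU.left_eq hU.nonneg hU.second_nonneg

theorem monotoneOn (hU : IsSIProfile N a b c ub h U U' U'') (hab : a < b) :
    MonotoneOn U (Icc a b) :=
  hU.toHasRightSecondDerivOn.monotoneOn fun x hx => hU.deriv_nonneg hab x (Ico_subset_Icc_self hx)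

theorem mapsTo_Icc (hU : IsSIProfile N a b c ub h U U' U'') (hab : a < b) :
    MapsTo U (Icc a b) (Icc 0 ub) := by
  simpa only [hU.left_eq, hU.right_eq] using (hU.monotoneOn hab).mapsTo_Icc

theorem deriv_le_div (hU : IsSIProfile N a b c ub h U U' U'') (hc : c ∈ Ioo a b)
    (hx : x ∈ Icc a c) : U' x ≤ ub / (b - c) := by
  have hab : a < b := hc.1.trans hc.2
  have hx' : x ∈ Icc a b := ⟨hx.1, hx.2.trans hc.2.le⟩
  have htangent := hU.tangent_le hU.second_nonneg hx' (right_mem_Icc.2 hab.le)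
  rw [hU.right_eq] at htangent
  rw [le_div_iff₀ (sub_pos.2 hc.2)]
  nlinarith [hU.nonneg x hx', mul_le_mul_of_nonneg_left (sub_le_sub_left hx.2 b)
    (hU.deriv_nonneg hab x hx')]

theorem le_deriv_mul (hU : IsSIProfile N a b c ub h U U' U'') (hx : x ∈ Icc a b) :
    U x ≤ U' x * (x - a) := by
  have := hU.tangent_le hU.second_nonneg hx (left_mem_Icc.2 (hx.1.trans hx.2))
  rw [hU.left_eq] at this
  linarith

theorem second_le_of_straight (hU : IsSIProfile N a b c ub h U U' U'') (hc : c ∈ Ioo a b)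
    (hN : Differentiable ℝ (Function.uncurry N)) (hM₀ : 0 ≤ M)
    (hM : IsTaylorBound (Function.uncurry N) (Icc 0 ub ×ˢ Icc a b) M) (hx : x ∈ Ico a c) :
    U'' x ≤ M * (1 + (b - a) * (1 + ub / (b - c))) * U x := by
  have hab : a < b := hc.1.trans hc.2
  obtain ⟨ξ, ⟨haξ, hξx⟩, -, hU''⟩ := hU.straight x hx
  have hξ : ξ ∈ Icc a b := ⟨haξ, hξx.trans (hx.2.trans hc.2).le⟩
  have hmem : (U ξ, ξ) ∈ Icc 0 ub ×ˢ Icc a b := ⟨hU.mapsTo_Icc hab hξ, hξ⟩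
  have hU'ξ := hU.deriv_nonneg hab ξ hξ
  have hslope := hU.deriv_le_div hc ⟨haξ, hξx.trans hx.2.le⟩
  have hdir : ‖((x - ξ) * U' ξ, x - ξ)‖ ≤ (b - a) * (1 + ub / (b - c)) := by
    have hstep : x - ξ ≤ b - a := by linarith [hx.2, hc.2]
    have h₁ : (x - ξ) * U' ξ ≤ (b - a) * (ub / (b - c)) := by gcongr
    have h₂ := mul_nonneg (sub_nonneg.2 hab.le) (hU'ξ.trans hslope)
    rw [Prod.norm_mk, Real.norm_of_nonneg (mul_nonneg (sub_nonneg.2 hξx) hU'ξ),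
      Real.norm_of_nonneg (sub_nonneg.2 hξx)]
    exact max_le (by linarith) (by linarith)
  rw [hU'', alphaC_eq_linearization hN]
  refine mul_le_mul_of_nonneg_right ?_ (hU.nonneg x ⟨hx.1, (hx.2.trans hc.2).le⟩)
  calc N (U ξ) ξ + fderiv ℝ (Function.uncurry N) (U ξ, ξ) ((x - ξ) * U' ξ, x - ξ)
      ≤ M + M * ((b - a) * (1 + ub / (b - c))) :=
        add_le_add ((le_abs_self _).trans (hM.norm_apply_le _ hmem))
          ((le_abs_self _).trans ((hM.norm_fderiv_apply_le hmem _).trans (by gcongr)))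
    _ = M * (1 + (b - a) * (1 + ub / (b - c))) := by ring

-- The factor `U ξ` in `pd2 (Ncal N) (U ξ) ξ = pd2 N (U ξ) ξ * U ξ` compensates for the
-- possibly small slope `U' ξ`, because `U ξ ≤ U' ξ * (ξ - a)` by convexity.
theorem second_le_of_inverse (hU : IsSIProfile N a b c ub h U U' U'') (hc : c ∈ Ioo a b)
    (hM₀ : 0 ≤ M) (hN : ∀ q ∈ Icc 0 ub, ∀ y ∈ Icc a b, |N q y| ≤ M)
    (hpd1 : ∀ q ∈ Icc 0 ub, ∀ y ∈ Icc a b, |pd1 (Ncal N) q y| ≤ M)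
    (hpd2 : ∀ q ∈ Icc 0 ub, ∀ y ∈ Icc a b, |pd2 N q y| ≤ M) (hx : x ∈ Ico c b) :
    U'' x ≤ M * (1 + (b - a) + 1) * U x := by
  have hab : a < b := hc.1.trans hc.2
  obtain ⟨ξ, ⟨hcξ, hξx⟩, -, hU''⟩ := hU.inverse x hx
  have hξ : ξ ∈ Icc a b := ⟨hc.1.le.trans hcξ, hξx.trans hx.2.le⟩
  have hUξ := hU.mapsTo_Icc hab hξ
  have hstep : 0 ≤ U x - U ξ :=
    sub_nonneg.2 (hU.monotoneOn hab hξ ⟨hc.1.le.trans hx.1, hx.2.le⟩ hξx)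
  have hratio : U ξ / U' ξ ≤ b - a := by
    rw [div_le_iff₀ (hU.deriv_pos ξ ⟨hcξ, hξ.2⟩)]
    nlinarith [hU.le_deriv_mul hξ, hξ.2, hU.deriv_nonneg hab ξ hξ]
  have hratio₀ : 0 ≤ U ξ / U' ξ := div_nonneg hUξ.1 (hU.deriv_nonneg hab ξ hξ)
  have h₁ := (le_abs_self _).trans (hpd1 (U ξ) hUξ ξ hξ)
  have h₂ : pd2 N (U ξ) ξ * (U ξ / U' ξ) ≤ M * (b - a) :=
    (mul_le_mul_of_nonneg_right ((le_abs_self _).trans (hpd2 (U ξ) hUξ ξ hξ)) hratio₀).trans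
      (by gcongr)
  calc U'' x
      = (pd1 (Ncal N) (U ξ) ξ + pd2 N (U ξ) ξ * (U ξ / U' ξ)) * (U x - U ξ) + N (U ξ) ξ * U ξ := by
        rw [hU'', betaC, pd2_Ncal, Ncal]
        ring
    _ ≤ (M + M * (b - a)) * U x + M * U x := by
        refine add_le_add (mul_le_mul (add_le_add h₁ h₂) (by linarith [hUξ.1]) hstep ?_)
          (mul_le_mul ((le_abs_self _).trans (hN _ hUξ ξ hξ)) (by linarith) hUξ.1 hM₀)
        exact add_nonneg hM₀ (mul_nonneg hM₀ (sub_nonneg.2 hab.le))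
    _ = M * (1 + (b - a) + 1) * U x := by ring

theorem exists_second_le (hc : c ∈ Ioo a b) (hub : 0 ≤ ub)
    (hN : ContDiff ℝ 2 (Function.uncurry N)) :
    ∃ C, 0 ≤ C ∧ ∀ {h : ℝ} {U U' U'' : ℝ → ℝ}, IsSIProfile N a b c ub h U U' U'' →
      ∀ x ∈ Ico a b, U'' x ≤ C * U x := by
  have hab : a < b := hc.1.trans hc.2
  have hdiff : Differentiable ℝ (Function.uncurry N) := hN.differentiable two_ne_zero
  obtain ⟨M, hM₀, hM, hM'⟩ := exists_isTaylorBound_Ncal hN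
    (isCompact_Icc.prod isCompact_Icc) ((convex_Icc 0 ub).prod (convex_Icc a b))
  have hpd1 (q : ℝ) (hq : q ∈ Icc 0 ub) (y : ℝ) (hy : y ∈ Icc a b) : |pd1 (Ncal N) q y| ≤ M := by
    simpa [fderiv_uncurry_apply ((contDiff_uncurry_Ncal hN).differentiable two_ne_zero)]
      using hM'.norm_fderiv_apply_le (mk_mem_prod hq hy) (1, 0)
  have hpd2 (q : ℝ) (hq : q ∈ Icc 0 ub) (y : ℝ) (hy : y ∈ Icc a b) : |pd2 N q y| ≤ M := by
    simpa [fderiv_uncurry_apply hdiff] using hM.norm_fderiv_apply_le (mk_mem_prod hq hy) (0, 1)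
  have hba : 0 ≤ b - a := sub_nonneg.2 hab.le
  have hslope : 0 ≤ ub / (b - c) := div_nonneg hub (sub_nonneg.2 hc.2.le)
  refine ⟨M * (1 + (b - a) * (1 + ub / (b - c)) + 1), by positivity, fun hU x hx => ?_⟩
  have hUx := hU.nonneg x (Ico_subset_Icc_self hx)
  rcases lt_or_ge x c with hxc | hcx
  · refine (hU.second_le_of_straight hc hdiff hM₀ hM ⟨hx.1, hxc⟩).trans ?_
    exact mul_le_mul_of_nonneg_right (mul_le_mul_of_nonneg_left (by linarith) hM₀) hUx
  · refine (hU.second_le_of_inverse hc hM₀ (fun q hq y hy => hM.norm_apply_le (q, y) ⟨hq, hy⟩)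
      hpd1 hpd2 ⟨hcx, hx.2⟩).trans ?_
    refine mul_le_mul_of_nonneg_right (mul_le_mul_of_nonneg_left ?_ hM₀) hUx
    nlinarith [mul_nonneg hba hslope]

/-! ### Residuals of profiles -/

theorem abs_residual_le_of_straight (hU : IsSIProfile N a b c ub h U U' U'') (hc : c ∈ Ioo a b)
    (hN : Differentiable ℝ (Function.uncurry N)) (hM₀ : 0 ≤ M)
    (hM : IsTaylorBound (Function.uncurry N) (Icc 0 ub ×ˢ Icc a b) M)
    (hD : ∀ x ∈ Ico a b, |U'' x| ≤ D) (hP₀ : 0 ≤ P) (hP : ∀ x ∈ Icc a c, U' x ≤ P)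
    (hx : x ∈ Ico a c) :
    |U'' x - Ncal N (U x) x| ≤ M * ((P + 1) ^ 2 + D) * ub * h ^ 2 := by
  have hab : a < b := hc.1.trans hc.2
  obtain ⟨ξ, ⟨haξ, hξx⟩, hstep, hU''⟩ := hU.straight x hx
  have hx' : x ∈ Icc a b := ⟨hx.1, (hx.2.trans hc.2).le⟩
  have hξ : ξ ∈ Icc a b := ⟨haξ, hξx.trans hx'.2⟩
  have hUx := hU.mapsTo_Icc hab hx'
  have hk : 0 ≤ x - ξ := sub_nonneg.2 hξx
  have hD₀ : 0 ≤ D := (abs_nonneg _).trans (hD a (left_mem_Ico.2 hab))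
  have hdist : ‖((U x, x) : ℝ × ℝ) - (U ξ, ξ)‖ ≤ (P + 1) * (x - ξ) := by
    have htangent := hU.tangent_le hU.second_nonneg hx' hξ
    have hslope := mul_le_mul_of_nonneg_right (hP x ⟨hx.1, hx.2.le⟩) hk
    have hPk := mul_nonneg hP₀ hk
    rw [Prod.mk_sub_mk, Prod.norm_mk, Real.norm_of_nonneg hk,
      Real.norm_of_nonneg (sub_nonneg.2 (hU.monotoneOn hab hξ hx' hξx))]
    exact max_le (by linarith) (by linarith)
  have hcurve : ‖((U x, x) : ℝ × ℝ) - (U ξ, ξ) - ((x - ξ) * U' ξ, x - ξ)‖ ≤ D * (x - ξ) ^ 2 := by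
    have htaylor := hU.abs_taylor_le hD hξ hx' hξx
    rw [Prod.mk_sub_mk, Prod.mk_sub_mk, sub_self, Prod.norm_mk, norm_zero, mul_comm (x - ξ) (U' ξ)]
    exact max_le htaylor (by positivity)
  have hlin := hM.norm_linearization_sub_le (p := (U ξ, ξ)) (q := (U x, x))
    ⟨hU.mapsTo_Icc hab hξ, hξ⟩ ⟨hUx, hx'⟩ ((x - ξ) * U' ξ, x - ξ)
  rw [hU'', Ncal, ← sub_mul, abs_mul, abs_of_nonneg hUx.1, alphaC_eq_linearization hN]
  calc _ ≤ (M * ((P + 1) * h) ^ 2 + M * (D * h ^ 2)) * ub := by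
        refine mul_le_mul (hlin.trans ?_) hUx.2 hUx.1 (by positivity)
        gcongr
        · exact hdist.trans (by gcongr)
        · exact hcurve.trans (by gcongr)
    _ = M * ((P + 1) ^ 2 + D) * ub * h ^ 2 := by ring

theorem abs_residual_le_of_inverse (hU : IsSIProfile N a b c ub h U U' U'') (hc : c ∈ Ioo a b)
    (hN : Differentiable ℝ (Function.uncurry (Ncal N))) (hM₀ : 0 ≤ M)
    (hM : IsTaylorBound (Function.uncurry (Ncal N)) (Icc 0 ub ×ˢ Icc a b) M)
    (hD : ∀ x ∈ Ico a b, |U'' x| ≤ D) (hδ₀ : 0 < δ) (hδ : ∀ x ∈ Icc a b, δ ≤ U' x)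
    (hx : x ∈ Ico c b) :
    |U'' x - Ncal N (U x) x| ≤ M * ((1 + 1 / δ) ^ 2 + D / δ ^ 3) * h ^ 2 := by
  have hab : a < b := hc.1.trans hc.2
  obtain ⟨ξ, ⟨hcξ, hξx⟩, hstep, hU''⟩ := hU.inverse x hx
  have hx' : x ∈ Icc a b := ⟨hc.1.le.trans hx.1, hx.2.le⟩
  have hξ : ξ ∈ Icc a b := ⟨hc.1.le.trans hcξ, hξx.trans hx'.2⟩
  have hk : 0 ≤ U x - U ξ := sub_nonneg.2 (hU.monotoneOn hab hξ hx' hξx)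
  have hD₀ : 0 ≤ D := (abs_nonneg _).trans (hD a (left_mem_Ico.2 hab))
  have hspread : x - ξ ≤ (U x - U ξ) / δ := by
    rw [le_div_iff₀' hδ₀]
    simpa only [abs_of_nonneg hk, abs_of_nonneg (sub_nonneg.2 hξx)] using
      hU.mul_abs_sub_le_abs_sub (fun y hy => hδ y (Ico_subset_Icc_self hy)) hξ hx'
  have hdist : ‖((U x, x) : ℝ × ℝ) - (U ξ, ξ)‖ ≤ (1 + 1 / δ) * (U x - U ξ) := by
    rw [Prod.mk_sub_mk, Prod.norm_mk, Real.norm_of_nonneg hk,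
      Real.norm_of_nonneg (sub_nonneg.2 hξx), add_mul, one_mul, one_div_mul_eq_div]
    exact max_le (le_add_of_nonneg_right (by positivity)) (by linarith)
  have hcurve : ‖((U x, x) : ℝ × ℝ) - (U ξ, ξ) - (U x - U ξ, (U x - U ξ) * (1 / U' ξ))‖ ≤
      D / δ ^ 3 * (U x - U ξ) ^ 2 := by
    rw [Prod.mk_sub_mk, Prod.mk_sub_mk, sub_self, Prod.norm_mk, norm_zero,
      max_eq_right (norm_nonneg _)]
    exact hU.abs_taylor_inverse_le hD hδ₀ hδ hξ hx' hξx
  have hlin := hM.norm_linearization_sub_le (p := (U ξ, ξ)) (q := (U x, x))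
    ⟨hU.mapsTo_Icc hab hξ, hξ⟩ ⟨hU.mapsTo_Icc hab hx', hx'⟩
    (U x - U ξ, (U x - U ξ) * (1 / U' ξ))
  rw [hU'', neg_betaC_eq_linearization hN]
  calc _ ≤ M * ((1 + 1 / δ) * h) ^ 2 + M * (D / δ ^ 3 * h ^ 2) := by
        refine hlin.trans ?_
        gcongr
        · exact hdist.trans (by gcongr)
        · exact hcurve.trans (by gcongr)
    _ = M * ((1 + 1 / δ) ^ 2 + D / δ ^ 3) * h ^ 2 := by ring

theorem exists_isApproxSol (hc : c ∈ Ioo a b) (hub : 0 < ub)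
    (hN : ContDiff ℝ 2 (Function.uncurry N)) :
    ∃ δ K, 0 < δ ∧ 0 ≤ K ∧ ∀ {h : ℝ} {U U' U'' : ℝ → ℝ}, IsSIProfile N a b c ub h U U' U'' →
      (∀ x ∈ Icc a b, δ ≤ U' x) ∧ IsApproxSol (Ncal N) a b (K * h ^ 2) U U' U'' := by
  have hab : a < b := hc.1.trans hc.2
  obtain ⟨C, hC₀, hC⟩ := exists_second_le hc hub.le hN
  obtain ⟨M, hM₀, hM, hM'⟩ := exists_isTaylorBound_Ncal hN
    (isCompact_Icc.prod isCompact_Icc) ((convex_Icc 0 ub).prod (convex_Icc a b))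
  set δ := ub / Real.exp ((C + 1) * (b - a))
  set P := ub / (b - c)
  have hδ₀ : 0 < δ := div_pos hub (Real.exp_pos _)
  have hP₀ : 0 ≤ P := div_nonneg hub.le (sub_nonneg.2 hc.2.le)
  set K₁ := M * ((P + 1) ^ 2 + C * ub) * ub
  set K₂ := M * ((1 + 1 / δ) ^ 2 + C * ub / δ ^ 3)
  have hK₁₀ : 0 ≤ K₁ := by positivity
  have hK₂₀ : 0 ≤ K₂ := by positivity
  refine ⟨δ, K₁ + K₂, hδ₀, by positivity, fun {h U U' U''} hU => ?_⟩
  have hδ (x : ℝ) (hx : x ∈ Icc a b) : δ ≤ U' x := by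
    simpa only [hU.right_eq] using
      hU.div_exp_le_deriv hC₀ hab hU.left_eq hU.nonneg hU.second_nonneg (hC hU) hx
  have hD (x : ℝ) (hx : x ∈ Ico a b) : |U'' x| ≤ C * ub := by
    rw [abs_of_nonneg (hU.second_nonneg x hx)]
    exact (hC hU x hx).trans (by gcongr; exact (hU.mapsTo_Icc hab (Ico_subset_Icc_self hx)).2)
  refine ⟨hδ, hU.toHasRightSecondDerivOn, fun x hx => ?_⟩
  rcases lt_or_ge x c with hxc | hcx
  · refine (hU.abs_residual_le_of_straight hc (hN.differentiable two_ne_zero) hM₀ hM hD hP₀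
      (fun y hy => hU.deriv_le_div hc hy) ⟨hx.1, hxc⟩).trans ?_
    gcongr
    linarith
  · refine (hU.abs_residual_le_of_inverse hc
      ((contDiff_uncurry_Ncal hN).differentiable two_ne_zero) hM₀ hM' hD hδ₀ hδ
      ⟨hcx, hx.2⟩).trans ?_
    gcongr
    linarith

end IsSIProfile

/-! ### From scheme pairs to profiles -/

theorem exists_rightDeriv_of_knots {p : ℕ → ℝ} {n : ℕ} {f : ℝ → ℝ} {φ : ℕ → ℝ → ℝ}
    (hp : ∀ i < n, p i ≤ p (i + 1))
    (hf : ∀ i < n, ∀ x ∈ Icc (p i) (p (i + 1)),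
      HasDerivWithinAt f (φ i x) (Icc (p i) (p (i + 1))) x) :
    ∃ f' : ℝ → ℝ, ∀ x ∈ Ico (p 0) (p n), HasDerivWithinAt f (f' x) (Ici x) x ∧
      ∃ i < n, p i ∈ Icc (p 0) x ∧ x < p (i + 1) ∧ f' x = φ i x := by
  have hmono : MonotoneOn p (Iic n) :=
    monotoneOn_of_le_succ ordConnected_Iic fun i _ _ hi => hp i (Nat.lt_of_succ_le hi)
  suffices h : ∀ x ∈ Ico (p 0) (p n), ∃ d, HasDerivWithinAt f d (Ici x) x ∧
      ∃ i < n, p i ∈ Icc (p 0) x ∧ x < p (i + 1) ∧ d = φ i x by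
    choose! f' hf' using h
    exact ⟨f', hf'⟩
  intro x hx
  obtain ⟨i, hin, hix, hxi⟩ : ∃ i < n, p i ≤ x ∧ x < p (i + 1) := by
    by_contra! hstay
    have hle : ∀ j ≤ n, p j ≤ x := fun j => Nat.recOn j (fun _ => hx.1)
      fun i ih hi => hstay i hi (ih (Nat.le_of_succ_le hi))
    exact (hle n le_rfl).not_gt hx.2
  exact ⟨φ i x, hasDerivWithinAt_Ici_of_Icc (hf i hin x ⟨hix, hxi.le⟩) ⟨hix, hxi⟩, i, hin,
    ⟨hmono (Nat.zero_le n) hin.le (Nat.zero_le i), hix⟩, hxi, rfl⟩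

/-- A convex solution of the straight scheme on `[a, c]`, with the mesh replaced by the property
that every `x` is reached from a knot `ξ ≤ x` at distance at most `h`. -/
structure IsStraightArc (N : ℝ → ℝ → ℝ) (a c h : ℝ) (U U' U'' : ℝ → ℝ) : Prop extends
    HasRightSecondDerivOn U U' U'' a c where
  second_nonneg : ∀ x ∈ Ico a c, 0 ≤ U'' x
  exists_knot : ∀ x ∈ Ico a c, ∃ ξ ∈ Icc a x,
    x - ξ ≤ h ∧ U'' x = alphaC N ξ (U' ξ) (U ξ) x * U x

/-- An increasing concave solution of the inverse scheme on `[s, ub]`, with the mesh replaced by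
the property that every `v` is reached from a knot `w ≤ v` at distance at most `h`. -/
structure IsInverseArc (N : ℝ → ℝ → ℝ) (s ub h : ℝ) (X X' X'' : ℝ → ℝ) : Prop extends
    HasRightSecondDerivOn X X' X'' s ub where
  deriv_pos : ∀ v ∈ Icc s ub, 0 < X' v
  second_nonpos : ∀ v ∈ Ico s ub, X'' v ≤ 0
  exists_knot : ∀ v ∈ Ico s ub, ∃ w ∈ Icc s v,
    v - w ≤ h ∧ X'' v = betaC N w (X' w) (X w) v * X' v ^ 3

section Arcs

variable {N : ℝ → ℝ → ℝ} {a b c ub s h : ℝ} {ms mi : Mesh} {U U' U'' X X' X'' V : ℝ → ℝ}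

theorem GoodPair.exists_isStraightArc (hpair : GoodPair N a b c ub ms mi U U' X X')
    (ha : ms.pt 0 = a) (hc : ms.pt ms.n = c) (hstep : ∀ i < ms.n, ms.pt (i + 1) - ms.pt i ≤ h) :
    ∃ U'', IsStraightArc N a c h U U' U'' := by
  obtain ⟨⟨⟨hderiv, hcont, hsecond⟩, hUa, -⟩, -, hsign, -⟩ := hpair
  obtain ⟨U'', hU''⟩ := exists_rightDeriv_of_knots (fun i hi => (ms.mono i hi).le) hsecond
  rw [ha, hc] at hU''
  refine ⟨U'', ⟨hderiv, hcont, fun x hx => (hU'' x hx).1⟩, fun x hx => ?_, fun x hx => ?_⟩ <;>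
    obtain ⟨-, i, hi, hix, hxi, heq⟩ := hU'' x hx
  · rw [heq]
    rcases hx.1.eq_or_lt with rfl | hlt
    · rw [hUa, mul_zero]
    · exact hsign i hi x ⟨hix.2, hxi.le⟩ ⟨hlt, hx.2.le⟩
  · exact ⟨ms.pt i, hix, by linarith [hstep i hi], heq⟩

theorem GoodPair.exists_isInverseArc (hpair : GoodPair N a b c ub ms mi U U' X X') (hac : a < c)
    (h0 : mi.pt 0 = 0) (hub : mi.pt mi.n = ub)
    (hstep : ∀ i < mi.n, ubar mi (U c) (i + 1) - ubar mi (U c) i ≤ h)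
    (hmono : Monotone fun t => Ncal N t c) :
    ∃ X'', IsInverseArc N (U c) ub h X X' X'' := by
  obtain ⟨⟨-, -, hs₀, hs, -, ⟨hderiv, hcont, hsecond⟩, -, hXs, hX's⟩, hpos, -, hXpos, hsign⟩ :=
    hpair
  have hX' (v : ℝ) (hv : v ∈ Icc (U c) ub) : 0 < X' v := by
    rcases hv.1.eq_or_lt with rfl | hlt
    · exact hX's ▸ one_div_pos.2 (hpos c ⟨hac, le_rfl⟩).2.2
    · exact (hXpos v ⟨hlt, hv.2⟩).2
  obtain ⟨X'', hX''⟩ := exists_rightDeriv_of_knots (p := ubar mi (U c))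
    (fun i hi => max_le_max_right (U c) (mi.mono i hi).le) hsecond
  rw [show ubar mi (U c) 0 = U c by rw [ubar, h0, max_eq_right hs₀.le],
    show ubar mi (U c) mi.n = ub by rw [ubar, hub, max_eq_left hs.le]] at hX''
  refine ⟨X'', ⟨hderiv, hcont, fun v hv => (hX'' v hv).1⟩, hX', fun v hv => ?_, fun v hv => ?_⟩ <;>
    obtain ⟨-, i, hi, hiv, hvi, heq⟩ := hX'' v hv
  · rw [heq]
    rcases hv.1.eq_or_lt with rfl | hlt
    · have hβ : betaC N (U c) (X' (U c)) (X (U c)) (U c) ≤ 0 := by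
        simpa [betaC, hXs] using Ncal_nonneg hmono hs₀.le
      rw [le_antisymm hiv.2 hiv.1]
      exact mul_nonpos_of_nonpos_of_nonneg hβ (pow_pos (hX' _ (Ico_subset_Icc_self hv)) 3).le
    · exact hsign i hi v ⟨hiv.2, hvi.le⟩ ⟨hlt, hv.2.le⟩
  · exact ⟨ubar mi (U c) i, hiv, by linarith [hstep i hi], heq⟩

theorem mapsTo_Ico_of_rightInvOn (hV : MapsTo V (Icc (X s) (X ub)) (Icc s ub))
    (hXV : RightInvOn V X (Icc (X s) (X ub))) :
    MapsTo V (Ico (X s) (X ub)) (Ico s ub) := by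
  intro x hx
  have hx' := Ico_subset_Icc_self hx
  refine ⟨(hV hx').1, (hV hx').2.lt_of_ne fun heq => hx.2.ne ?_⟩
  rw [← hXV hx', heq]

theorem IsInverseArc.second_nonneg_rightInv (hX : IsInverseArc N s ub h X X' X'')
    (hV : MapsTo V (Icc (X s) (X ub)) (Icc s ub)) (hXV : RightInvOn V X (Icc (X s) (X ub))) :
    ∀ x ∈ Ico (X s) (X ub), 0 ≤ -X'' (V x) / X' (V x) ^ 3 := fun _ hx =>
  div_nonneg (neg_nonneg.2 (hX.second_nonpos _ (mapsTo_Ico_of_rightInvOn hV hXV hx)))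
    (pow_pos (hX.deriv_pos _ (hV (Ico_subset_Icc_self hx))) 3).le

theorem IsInverseArc.exists_knot_rightInv (hX : IsInverseArc N s ub h X X' X'')
    (hV : MapsTo V (Icc (X s) (X ub)) (Icc s ub)) (hXV : RightInvOn V X (Icc (X s) (X ub))) :
    ∀ x ∈ Ico (X s) (X ub), ∃ ξ ∈ Icc (X s) x, V x - V ξ ≤ h ∧
      -X'' (V x) / X' (V x) ^ 3 = -betaC N (V ξ) (X' (V ξ)) ξ (V x) := by
  intro x hx
  have hVx := mapsTo_Ico_of_rightInvOn hV hXV hx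
  obtain ⟨w, hw, hstep, heq⟩ := hX.exists_knot (V x) hVx
  have hs : s ∈ Icc s ub := left_mem_Icc.2 (hVx.1.trans hVx.2.le)
  have hw' : w ∈ Icc s ub := ⟨hw.1, hw.2.trans hVx.2.le⟩
  have hmono := hX.strictMonoOn hX.deriv_pos
  have hwx : X w ≤ x := (hmono.monotoneOn hw' (Ico_subset_Icc_self hVx) hw.2).trans_eq
    (hXV (Ico_subset_Icc_self hx))
  have hξ : X w ∈ Icc (X s) x := ⟨hmono.monotoneOn hs hw' hw.1, hwx⟩
  have hξ' : X w ∈ Icc (X s) (X ub) := ⟨hξ.1, hwx.trans hx.2.le⟩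
  have hVw : V (X w) = w := hmono.injOn (hV hξ') hw' (hXV hξ')
  refine ⟨X w, hξ, by rwa [hVw], ?_⟩
  rw [hVw, heq, ← neg_mul,
    mul_div_cancel_right₀ _ (pow_pos (hX.deriv_pos _ (Ico_subset_Icc_self hVx)) 3).ne']

theorem IsStraightArc.isSIProfile_piecewise (hU : IsStraightArc N a c h U U' U'')
    (hX : IsInverseArc N (U c) ub h X X' X'') (hc : c ∈ Ioo a b) (hUa : U a = 0)
    (hU₀ : ∀ x ∈ Icc a c, 0 ≤ U x) (hXc : X (U c) = c) (hXb : X ub = b) (hX' : X' (U c) = 1 / U' c)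
    (hV : MapsTo V (Icc c b) (Icc (U c) ub)) (hXV : RightInvOn V X (Icc c b))
    (hVc : V c = U c) (hVb : V b = ub) :
    IsSIProfile N a b c ub h ((Iic c).piecewise U V)
      ((Iic c).piecewise U' fun x => 1 / X' (V x))
      ((Iio c).piecewise U'' fun x => -X'' (V x) / X' (V x) ^ 3) := by
  have hV'c : U' c = 1 / X' (V c) := by rw [hVc, hX', one_div_one_div]
  have hmaps : MapsTo V (Icc (X (U c)) (X ub)) (Icc (U c) ub) := by rwa [hXc, hXb]
  have hinv : RightInvOn V X (Icc (X (U c)) (X ub)) := by rwa [hXc, hXb]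
  have hderiv := hX.rightInvOn hX.deriv_pos hmaps hinv
  have hsecond := hX.second_nonneg_rightInv hmaps hinv
  have hknot := hX.exists_knot_rightInv hmaps hinv
  rw [hXc, hXb] at hderiv hsecond hknot
  have hright {x : ℝ} (hx : c ≤ x) := piecewise_Iic_of_ge hVc.symm hx
  have hright' {x : ℝ} (hx : c ≤ x) :=
    piecewise_Iic_of_ge (f := U') (g := fun x => 1 / X' (V x)) hV'c hx
  exact {
    toHasRightSecondDerivOn := hU.piecewise hc.1.le hc.2.le hderiv hVc.symm hV'c
    left_eq := by rw [piecewise_eq_of_mem _ _ _ (mem_Iic.2 hc.1.le), hUa]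
    right_eq := by rw [hright hc.2.le, hVb]
    nonneg := fun x hx => by
      rcases le_or_gt x c with hxc | hcx
      · simpa [hxc] using hU₀ x ⟨hx.1, hxc⟩
      · rw [hright hcx.le]
        exact (hU₀ c (right_mem_Icc.2 hc.1.le)).trans (hV ⟨hcx.le, hx.2⟩).1
    deriv_pos := fun x hx => by
      rw [hright' hx.1]
      exact one_div_pos.2 (hX.deriv_pos _ (hV hx))
    second_nonneg := fun x hx => by
      rcases lt_or_ge x c with hxc | hcx
      · simpa [hxc] using hU.second_nonneg x ⟨hx.1, hxc⟩
      · simpa [hcx] using hsecond x ⟨hcx, hx.2⟩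
    straight := fun x hx => by
      obtain ⟨ξ, hξ, hstep, heq⟩ := hU.exists_knot x hx
      have hξc : ξ ∈ Iic c := hξ.2.trans hx.2.le
      refine ⟨ξ, hξ, hstep, ?_⟩
      rw [piecewise_eq_of_mem _ _ _ (mem_Iio.2 hx.2), piecewise_eq_of_mem _ _ _ hξc,
        piecewise_eq_of_mem _ _ _ hξc, piecewise_eq_of_mem _ _ _ (mem_Iic.2 hx.2.le), heq]
    inverse := fun x hx => by
      obtain ⟨ξ, hξ, hstep, heq⟩ := hknot x hx
      refine ⟨ξ, hξ, by rwa [hright hx.1, hright hξ.1], ?_⟩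
      rw [piecewise_eq_of_notMem _ _ _ (notMem_Iio.2 hx.1), hright hx.1, hright hξ.1,
        hright' hξ.1, one_div_one_div, heq] }

theorem GoodPair.exists_isSIProfile (hpair : GoodPair N a b c ub ms mi U U' X X')
    (hc : c ∈ Ioo a b) (hmono : Monotone fun t => Ncal N t c) (hms₀ : ms.pt 0 = a)
    (hms : ms.pt ms.n = c) (hmi₀ : mi.pt 0 = 0) (hmi : mi.pt mi.n = ub)
    (hstep : StepLe ms mi (U c) h) :
    ∃ W W' W'', IsSIProfile N a b c ub h W W' W'' ∧
      (∀ x ∈ Icc a c, W x = U x ∧ W' x = U' x) ∧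
      ∀ v ∈ Icc (U c) ub, X v ∈ Icc a b ∧ W (X v) = v ∧ X' v = 1 / W' (X v) := by
  obtain ⟨U'', hU⟩ := hpair.exists_isStraightArc hms₀ hms hstep.1
  obtain ⟨X'', hX⟩ := hpair.exists_isInverseArc hc.1 hmi₀ hmi hstep.2 hmono
  obtain ⟨⟨-, hUa, -, hs, -, -, hXb, hXc, hX'⟩, hpos, -⟩ := hpair
  have hU₀ (x : ℝ) (hx : x ∈ Icc a c) : 0 ≤ U x := by
    rcases hx.1.eq_or_lt with rfl | hlt
    · exact hUa.ge
    · exact (hpos x ⟨hlt, hx.2⟩).1.le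
  have hbij : BijOn X (Icc (U c) ub) (Icc c b) := by
    simpa only [hXc, hXb] using hX.bijOn hs.le hX.deriv_pos
  set V := Function.invFunOn X (Icc (U c) ub)
  have hVX : InvOn V X (Icc (U c) ub) (Icc c b) := hbij.invOn_invFunOn
  have hVc : V c = U c := by simpa only [hXc] using hVX.1 (left_mem_Icc.2 hs.le)
  have hVb : V b = ub := by simpa only [hXb] using hVX.1 (right_mem_Icc.2 hs.le)
  refine ⟨_, _, _, hU.isSIProfile_piecewise hX hc hUa hU₀ hXc hXb hX' hbij.surjOn.mapsTo_invFunOn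
    hVX.2 hVc hVb, fun x hx => ⟨piecewise_eq_of_mem _ _ _ hx.2, piecewise_eq_of_mem _ _ _ hx.2⟩,
    fun v hv => ?_⟩
  have hXv := hbij.mapsTo hv
  refine ⟨⟨hc.1.le.trans hXv.1, hXv.2⟩, ?_, ?_⟩
  · rw [piecewise_Iic_of_ge hVc.symm hXv.1, hVX.1 hv]
  · have hV'c : U' c = 1 / X' (V c) := by rw [hVc, hX', one_div_one_div]
    rw [piecewise_Iic_of_ge (g := fun x => 1 / X' (V x)) hV'c hXv.1, hVX.1 hv, one_div_one_div]

end Arcs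

/-! ### Error estimates -/

theorem HasRightSecondDerivOn.abs_one_div_deriv_sub_le {f f' f'' : ℝ → ℝ} {l r x y B m d δ : ℝ}
    (h : HasRightSecondDerivOn f f' f'' l r) (hB : ∀ t ∈ Ico l r, |f'' t| ≤ B) (hm₀ : 0 < m)
    (hm : ∀ t ∈ Icc l r, m ≤ f' t) (hδ₀ : 0 < δ) (hδ : δ ≤ d) (hx : x ∈ Icc l r)
    (hy : y ∈ Icc l r) :
    |1 / f' y - 1 / d| ≤ (B * |y - x| + |f' x - d|) / (m * δ) := by
  have hf'y : 0 < f' y := hm₀.trans_le (hm y hy)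
  have hd : 0 < d := hδ₀.trans_le hδ
  rw [div_sub_div _ _ hf'y.ne' hd.ne', one_mul, mul_one, abs_div, abs_of_pos (mul_pos hf'y hd),
    abs_sub_comm]
  have hslopes : |f' y - d| ≤ B * |y - x| + |f' x - d| :=
    (abs_sub_le _ (f' x) _).trans (by gcongr; exact h.abs_deriv_sub_le hB hx hy)
  exact div_le_div₀ ((abs_nonneg _).trans hslopes) hslopes (mul_pos hm₀ hδ₀)
    (mul_le_mul (hm y hy) hδ hδ₀.le hf'y.le)

namespace IsStraightBVP

variable {N : ℝ → ℝ → ℝ} {a b ub : ℝ} {u u' u'' : ℝ → ℝ}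

theorem exists_abs_sub_le (hu : IsStraightBVP N a b ub u u' u'') (hab : a < b)
    (hN : ContDiff ℝ 2 (Function.uncurry N)) (hmono : ∀ x ∈ Icc a b, Monotone fun t => Ncal N t x)
    (hmaps : MapsTo u (Icc a b) (Icc 0 ub)) :
    ∃ κ, 0 ≤ κ ∧ ∀ {R : ℝ} {w w' w'' : ℝ → ℝ}, IsApproxSol (Ncal N) a b R w w' w'' → w a = 0 →
      w b = ub → MapsTo w (Icc a b) (Icc 0 ub) →
      ∀ x ∈ Icc a b, |u x - w x| ≤ κ * R ∧ |u' x - w' x| ≤ κ * R := by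
  have hNcal := contDiff_uncurry_Ncal hN
  have hconv : Convex ℝ (Icc 0 ub ×ˢ Icc a b) := (convex_Icc 0 ub).prod (convex_Icc a b)
  obtain ⟨M, hM₀, hM⟩ :=
    exists_isTaylorBound_of_contDiff hNcal (isCompact_Icc.prod isCompact_Icc) hconv
  have : 0 ≤ b - a := sub_nonneg.2 hab.le
  refine ⟨(b - a) ^ 2 / 8 + (M * ((b - a) ^ 2 / 8) + 1) * (b - a), by positivity,
    fun {R w w' w''} hw hwa hwb hwmaps x hx => ?_⟩
  have hR : 0 ≤ R := (abs_nonneg _).trans (hw.abs_residual_le a (left_mem_Ico.2 hab))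
  have hua : u a = w a := hu.2.2.1.trans hwa.symm
  have hub : u b = w b := hu.2.2.2.trans hwb.symm
  have herror (y : ℝ) (hy : y ∈ Icc a b) : |u y - w y| ≤ (b - a) ^ 2 / 8 * R :=
    (hu.isApproxSol.abs_sub_le hw hmono hab hua hub hy).trans_eq (by ring)
  have hlipschitz (y : ℝ) (hy : y ∈ Ico a b) :
      |Ncal N (u y) y - Ncal N (w y) y| ≤ M * |u y - w y| := by
    have hy' := Ico_subset_Icc_self hy
    simpa using hM.norm_sub_le (hNcal.differentiable two_ne_zero) hconv
      (mk_mem_prod (hwmaps hy') hy') (mk_mem_prod (hmaps hy') hy')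
  have hslope := hu.isApproxSol.abs_deriv_sub_le hw hM₀ hlipschitz
    (fun y hy => herror y (Ico_subset_Icc_self hy)) hab hua hub hx
  have h₀ : 0 ≤ (b - a) ^ 2 / 8 * R := by positivity
  have h₁ : 0 ≤ (M * ((b - a) ^ 2 / 8) + 1) * (b - a) * R := by positivity
  exact ⟨by linarith [herror x hx], by linarith⟩

theorem exists_abs_inverse_sub_le {δ : ℝ} (hu : IsStraightBVP N a b ub u u' u'') (hab : a ≤ b)
    (hpos : ∀ x ∈ Icc a b, 0 < u' x) (hδ₀ : 0 < δ) :
    ∃ κ, 0 ≤ κ ∧ ∀ {E d : ℝ}, ∀ x ∈ Icc a b, ∀ y ∈ Icc a b, |u x - u y| ≤ E →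
      |u' x - d| ≤ E → δ ≤ d → |y - x| ≤ κ * E ∧ |1 / u' y - 1 / d| ≤ κ * E := by
  have h := hu.1.hasRightSecondDerivOn
  have ha : a ∈ Icc a b := left_mem_Icc.2 hab
  obtain ⟨t, ht, hmin⟩ := isCompact_Icc.exists_isMinOn ⟨a, ha⟩ h.continuousOn_deriv
  obtain ⟨B, hB⟩ := isCompact_Icc.exists_bound_of_continuousOn hu.1.2.2
  have hB₀ : 0 ≤ B := (norm_nonneg _).trans (hB a ha)
  have hm := hpos t ht
  refine ⟨1 / u' t + (B * (1 / u' t) + 1) / (u' t * δ), by positivity,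
    fun {E d} x hx y hy hE hE' hδ => ?_⟩
  have hE₀ : 0 ≤ E := (abs_nonneg _).trans hE
  have hdist : |y - x| ≤ 1 / u' t * E := by
    rw [one_div_mul_eq_div, le_div_iff₀' hm]
    rw [abs_sub_comm] at hE
    exact (h.mul_abs_sub_le_abs_sub (fun s hs => hmin (Ico_subset_Icc_self hs)) hx hy).trans hE
  have hslope : |1 / u' y - 1 / d| ≤ (B * (1 / u' t) + 1) / (u' t * δ) * E := by
    refine (h.abs_one_div_deriv_sub_le (fun s hs => hB s (Ico_subset_Icc_self hs)) hm
      (fun s hs => hmin hs) hδ₀ hδ hx hy).trans ?_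
    rw [div_mul_eq_mul_div, add_mul, one_mul, mul_assoc]
    gcongr
  have h₀ : 0 ≤ 1 / u' t * E := by positivity
  have h₁ : 0 ≤ (B * (1 / u' t) + 1) / (u' t * δ) * E := by positivity
  exact ⟨by linarith, by linarith⟩

theorem exists_abs_sub_le_of_isSIProfile {c : ℝ} (hu : IsStraightBVP N a b ub u u' u'')
    (hc : c ∈ Ioo a b) (hub : 0 < ub) (hN : ContDiff ℝ 2 (Function.uncurry N))
    (hmono : ∀ x ∈ Icc a b, Monotone fun t => Ncal N t x) :
    ∃ κS κI, 0 < κS ∧ 0 < κI ∧ ∀ {h : ℝ} {w w' w'' : ℝ → ℝ}, IsSIProfile N a b c ub h w w' w'' →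
      (∀ x ∈ Icc a b, |u x - w x| ≤ κS * h ^ 2 ∧ |u' x - w' x| ≤ κS * h ^ 2) ∧
      ∀ x ∈ Icc a b, ∀ y ∈ Icc a b, u y = w x →
        |y - x| ≤ κI * h ^ 2 ∧ |1 / u' y - 1 / w' x| ≤ κI * h ^ 2 := by
  have hab : a < b := hc.1.trans hc.2
  have hpos := hu.deriv_pos hab hub hN.continuous hmono
  obtain ⟨δ, K, hδ₀, hK₀, hK⟩ := IsSIProfile.exists_isApproxSol hc hub hN
  obtain ⟨κ, hκ₀, hκ⟩ := hu.exists_abs_sub_le hab hN hmono (hu.bijOn hab.le hpos).mapsTo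
  obtain ⟨κ', hκ'₀, hκ'⟩ := hu.exists_abs_inverse_sub_le hab.le hpos hδ₀
  have hκS : κ * K ≤ κ * K + 1 := le_add_of_nonneg_right zero_le_one
  refine ⟨κ * K + 1, κ' * (κ * K + 1) + 1, by positivity, by positivity,
    fun {h w w' w''} hw => ?_⟩
  obtain ⟨hδ, hsol⟩ := hK hw
  have herror (x : ℝ) (hx : x ∈ Icc a b) :
      |u x - w x| ≤ (κ * K + 1) * h ^ 2 ∧ |u' x - w' x| ≤ (κ * K + 1) * h ^ 2 := by
    have hle : κ * (K * h ^ 2) ≤ (κ * K + 1) * h ^ 2 := by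
      rw [← mul_assoc]
      exact mul_le_mul_of_nonneg_right hκS (sq_nonneg h)
    exact (hκ hsol hw.left_eq hw.right_eq (hw.mapsTo_Icc hab) x hx).imp hle.trans' hle.trans'
  refine ⟨herror, fun x hx y hy hxy => ?_⟩
  have hle : κ' * ((κ * K + 1) * h ^ 2) ≤ (κ' * (κ * K + 1) + 1) * h ^ 2 := by
    rw [← mul_assoc]
    exact mul_le_mul_of_nonneg_right (le_add_of_nonneg_right zero_le_one) (sq_nonneg h)
  exact (hκ' x hx y hy (hxy ▸ (herror x hx).1) (herror x hx).2 (hδ x hx)).imp hle.trans' hle.trans'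

theorem hasRightSecondDerivOn_of_rightInvOn {g : ℝ → ℝ} (hu : IsStraightBVP N a b ub u u' u'')
    (hpos : ∀ x ∈ Icc a b, 0 < u' x) (hg : MapsTo g (Icc 0 ub) (Icc a b))
    (hug : RightInvOn g u (Icc 0 ub)) :
    HasRightSecondDerivOn g (fun v => 1 / u' (g v)) (fun v => -u'' (g v) / u' (g v) ^ 3) 0 ub := by
  obtain ⟨hC2, -, hua, rfl⟩ := hu
  rw [← hua] at hg hug ⊢
  exact hC2.hasRightSecondDerivOn.rightInvOn hpos hg hug

end IsStraightBVP

theorem si_method_approximation_general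
    (a b c ub : ℝ) (hub : 0 < ub) (hc : c ∈ Ioo a b)
    (N : ℝ → ℝ → ℝ) (hN : ContDiff ℝ 2 (Function.uncurry N))
    (hC1 : ∀ t : ℝ, ∀ x ∈ Icc a b, 0 ≤ pd1 (Ncal N) t x)
    (u u' u'' : ℝ → ℝ)
    (hu : IsStraightBVP N a b ub u u' u'') :
    StrictMonoOn u (Icc a b) ∧ (∀ x ∈ Icc a b, 0 < u' x) ∧
    ∃ xinv xinv' : ℝ → ℝ,
      (∀ t ∈ Icc a b, xinv (u t) = t) ∧
      (∀ v ∈ Icc (0 : ℝ) ub, xinv v ∈ Icc a b ∧ u (xinv v) = v) ∧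
      (∀ v ∈ Icc (0 : ℝ) ub, HasDerivWithinAt xinv (xinv' v) (Icc 0 ub) v) ∧
      ContinuousOn xinv' (Icc 0 ub) ∧
      ∃ κS κI : ℝ, 0 < κS ∧ 0 < κI ∧
        ∀ ms mi : Mesh,
          ms.pt 0 = a → ms.pt ms.n = c → mi.pt 0 = 0 → mi.pt mi.n = ub →
          ∀ ut ut' X X' : ℝ → ℝ, GoodPair N a b c ub ms mi ut ut' X X' →
          ∀ h : ℝ, StepLe ms mi (ut c) h →
            (∀ x ∈ Icc a c,
              |u x - ut x| ≤ κS * h ^ 2 ∧ |u' x - ut' x| ≤ κS * h ^ 2) ∧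
            (∀ v ∈ Icc (ut c) ub,
              |xinv v - X v| ≤ κI * h ^ 2 ∧ |xinv' v - X' v| ≤ κI * h ^ 2) := by
  have hab : a < b := hc.1.trans hc.2
  have hmono (x : ℝ) (hx : x ∈ Icc a b) := monotone_Ncal hN fun t => hC1 t x hx
  have hpos := hu.deriv_pos hab hub hN.continuous hmono
  have hbij := hu.bijOn hab.le hpos
  set xinv := Function.invFunOn u (Icc a b)
  have hinv : InvOn xinv u (Icc a b) (Icc 0 ub) := hbij.invOn_invFunOn
  have hmaps : MapsTo xinv (Icc 0 ub) (Icc a b) := hbij.surjOn.mapsTo_invFunOn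
  have hxinv := hu.hasRightSecondDerivOn_of_rightInvOn hpos hmaps hinv.2
  obtain ⟨κS, κI, hκS, hκI, hκ⟩ := hu.exists_abs_sub_le_of_isSIProfile hc hub hN hmono
  refine ⟨hu.1.hasRightSecondDerivOn.strictMonoOn hpos, hpos, xinv, _, hinv.1,
    fun v hv => ⟨hmaps hv, hinv.2 hv⟩, hxinv.hasDeriv, hxinv.continuousOn_deriv,
    κS, κI, hκS, hκI, fun ms mi hms₀ hms hmi₀ hmi ut ut' X X' hpair h hstep => ?_⟩
  obtain ⟨w, w', w'', hw, hstraight, hinverse⟩ :=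
    hpair.exists_isSIProfile hc (hmono c (Ioo_subset_Icc_self hc)) hms₀ hms hmi₀ hmi hstep
  obtain ⟨herror, hinverse_error⟩ := hκ hw
  refine ⟨fun x hx => ?_, fun v hv => ?_⟩
  · rw [← (hstraight x hx).1, ← (hstraight x hx).2]
    exact herror x (Icc_subset_Icc_right hc.2.le hx)
  · have hv₀ : v ∈ Icc 0 ub := ⟨hpair.1.2.2.1.le.trans hv.1, hv.2⟩
    obtain ⟨hXv, hwv, hX'v⟩ := hinverse v hv
    rw [hX'v]
    exact hinverse_error (X v) hXv (xinv v) (hmaps hv₀) ((hinv.2 hv₀).trans hwv.symm)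

/-- main approximation theorem for the SI-method: under hypotheses (C1)
and (H), if `u` solves the straight BVP, then `u` is strictly increasing with `u' > 0`
on `[a,b]`, its inverse `x = u⁻¹` is continuously differentiable on `[0,u_b]`, and there
exist constants `κ_S, κ_I, h₀ > 0` (depending only on the data of the problem) such that
for all meshes of maximal step size `h ≤ h₀` and every scheme pair `(ũ, x̃)` satisfying
the sign inequalities, `ũ` approximates `u` within `κ_S·h²` in the C¹-norm on `[a,c]`
and `x̃` approximates `x` within `κ_I·h²` in the C¹-norm on `[ũ(c), u_b]`. -/
theorem si_method_approximation
    (a b c ub : ℝ) (hab : a < b) (hub : 0 < ub) (hc : c ∈ Ioo a b)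
    (N : ℝ → ℝ → ℝ) (hN : ContDiff ℝ 2 (Function.uncurry N))
    (hC1 : ∀ t : ℝ, ∀ x ∈ Icc a b, 0 ≤ pd1 (Ncal N) t x)
    (hH : HypH N a b)
    (u u' u'' : ℝ → ℝ)
    (hu : IsStraightBVP N a b ub u u' u'') :
    StrictMonoOn u (Icc a b) ∧ (∀ x ∈ Icc a b, 0 < u' x) ∧
    ∃ xinv xinv' : ℝ → ℝ,
      (∀ t ∈ Icc a b, xinv (u t) = t) ∧
      (∀ v ∈ Icc (0:ℝ) ub, xinv v ∈ Icc a b ∧ u (xinv v) = v) ∧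
      (∀ v ∈ Icc (0:ℝ) ub, HasDerivWithinAt xinv (xinv' v) (Icc 0 ub) v) ∧
      ContinuousOn xinv' (Icc 0 ub) ∧
      ∃ κS κI h₀ : ℝ, 0 < κS ∧ 0 < κI ∧ 0 < h₀ ∧
        ∀ ms mi : Mesh,
          ms.pt 0 = a → ms.pt ms.n = c → mi.pt 0 = 0 → mi.pt mi.n = ub →
          ∀ ut ut' X X' : ℝ → ℝ, GoodPair N a b c ub ms mi ut ut' X X' →
          ∀ h : ℝ, h ≤ h₀ → StepLe ms mi (ut c) h →
            (∀ x ∈ Icc a c,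
              |u x - ut x| ≤ κS * h ^ 2 ∧ |u' x - ut' x| ≤ κS * h ^ 2) ∧
            (∀ v ∈ Icc (ut c) ub,
              |xinv v - X v| ≤ κI * h ^ 2 ∧ |xinv' v - X' v| ≤ κI * h ^ 2) := by
  obtain ⟨hstrict, hpos, xinv, xinv', hleft, hright, hderiv, hcont, κS, κI, hκS, hκI, herror⟩ :=
    si_method_approximation_general a b c ub hub hc N hN hC1 u u' u'' hu
  exact ⟨hstrict, hpos, xinv, xinv', hleft, hright, hderiv, hcont, κS, κI, 1, hκS, hκI, one_pos,
    fun ms mi hms₀ hms hmi₀ hmi ut ut' X X' hpair h _ hstep =>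
      herror ms mi hms₀ hms hmi₀ hmi ut ut' X X' hpair h hstep⟩
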